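/- Every finite group occurs as a Galois group over ℚ̄(t), where ℚ̄ is the algebraic closure of ℚ; that is, for every finite group G there exists a finite Galois extension N of the field ℚ̄(t) of rational functions in one indeterminate over ℚ̄ with Gal(N/ℚ̄(t)) isomorphic to G. -/

import Mathlib

/-!
The cover is found by deforming the trivial one, with `X` as deformation parameter. Choose distinct
points `a g` of the affine line. Over power series in `X`, keep the trivial `G`-cover away from
these points, and near `a g` replace it by the cover induced from the cyclic Kummer cover
`y ^ orderOf g = (t - a g) / (t - a g - X)`, which is trivial modulo `X`. An additive Cousin
decomposition, given by partial fractions and applied to one coefficient of `X` after the other,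
glues the pieces: it yields a basis of the glued algebra permuted by `G` in which the structure
constants, after clearing denominators, are regular everywhere with a bounded pole at infinity,
hence polynomials in `t` over `k⟦X⟧`. Having finitely many coefficients, they are defined over a
finitely generated `k`-subalgebra of `k⟦X⟧`, and by the Nullstellensatz they specialize to
structure constants over `k[t]`.

What has to survive specialization is irreducibility, and it is guaranteed by ramification. At
`t = a g` the specialized algebra still has a point which is fixed by `g` and at which it is
normal, so over `k(t)` the algebra is reduced and `g` fixes one of its maximal ideals. As `G` acts
transitively on the maximal ideals and a transitive action on more than one point has an element
without fixed points, there is only one maximal ideal, and the algebra is a field.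
-/

open Polynomial
open scoped PowerSeries

universe u v

namespace Patching

/-! ### Invariant algebras that are fields -/

section FieldCriterion

open Pointwise

theorem subsingleton_of_forall_exists_smul_eq {G X : Type*} [Group G] [Finite G] [Finite X]
    [MulAction G X] [MulAction.IsPretransitive G X] (h : ∀ g : G, ∃ x : X, g • x = x) :
    Subsingleton X := by
  classical
  have := Fintype.ofFinite G
  have := Fintype.ofFinite X
  have := Fintype.ofFinite (Quotient (MulAction.orbitRel G X))
  have horbits : Fintype.card (Quotient (MulAction.orbitRel G X)) ≤ 1 :=
    Fintype.card_le_one_iff_subsingleton.2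
      ((MulAction.pretransitive_iff_subsingleton_quotient G X).1 inferInstance)
  have hpos : ∀ g : G, 1 ≤ Fintype.card (MulAction.fixedBy X g) := fun g =>
    have ⟨x, hx⟩ := h g
    Fintype.card_pos_iff.2 ⟨⟨x, hx⟩⟩
  have hone : Fintype.card (MulAction.fixedBy X (1 : G)) = Fintype.card X :=
    Fintype.card_congr (Equiv.subtypeUnivEquiv fun x => by simp)
  rw [← Fintype.card_le_one_iff_subsingleton, ← hone]
  by_contra! hlt
  have hsum : ∑ _g : G, 1 < ∑ g : G, Fintype.card (MulAction.fixedBy X g) :=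
    Finset.sum_lt_sum (fun g _ => hpos g) ⟨1, Finset.mem_univ _, hlt⟩
  rw [MulAction.sum_card_fixedBy_eq_card_orbits_mul_card_group G X, Finset.sum_const,
    Finset.card_univ, smul_eq_mul, mul_one] at hsum
  nlinarith

section Artinian

variable {F : Type*} [CommRing F] [IsArtinianRing F] [IsReduced F]

theorem eq_zero_of_forall_mem_maximal {x : F} (hx : ∀ m : MaximalSpectrum F, x ∈ m.asIdeal) :
    x = 0 := by
  apply (IsArtinianRing.equivPi F).injective
  rw [map_zero]
  funext m
  exact (IsArtinianRing.equivPi_apply F x m).trans (Ideal.Quotient.eq_zero_iff_mem.2 (hx m))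

theorem exists_idempotent_supported_at (m : MaximalSpectrum F) :
    ∃ e : F, IsIdempotentElem e ∧ 1 - e ∈ m.asIdeal ∧
      ∀ m' : MaximalSpectrum F, m' ≠ m → e ∈ m'.asIdeal := by
  classical
  set φ := IsArtinianRing.equivPi F
  have hφ : ∀ m', Ideal.Quotient.mk m'.asIdeal (φ.symm (Pi.single m 1)) =
      (Pi.single m 1 : ∀ I : MaximalSpectrum F, F ⧸ I.asIdeal) m' := fun m' =>
    (IsArtinianRing.equivPi_apply F _ m').symm.trans
      (congrFun (φ.apply_symm_apply (Pi.single m 1)) m')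
  refine ⟨φ.symm (Pi.single m 1), ?_, ?_, fun m' hm' => ?_⟩
  · rw [IsIdempotentElem, ← map_mul, ← Pi.single_mul, one_mul]
  · rw [← Ideal.Quotient.eq_zero_iff_mem, map_sub, hφ, Pi.single_eq_same, map_one, sub_self]
  · rw [← Ideal.Quotient.eq_zero_iff_mem, hφ, Pi.single_eq_of_ne hm']

theorem exists_smul_maximal_eq {G κ : Type*} [Group G] [MulSemiringAction G F] [Field κ] (g : G)
    (A : Subring F) (χ : A →+* κ) (hA : ∀ e : F, IsIdempotentElem e → e ∈ A)
    (hχ : ∀ b b' : A, (b' : F) = g • (b : F) → χ b' = χ b) :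
    ∃ m : MaximalSpectrum F, g • m.asIdeal = m.asIdeal := by
  have := Fintype.ofFinite (MaximalSpectrum F)
  choose e he hem hem' using exists_idempotent_supported_at (F := F)
  let b : MaximalSpectrum F → A := fun m => ⟨e m, hA _ (he m)⟩
  have hprod : ∏ m, (1 - b m) = 0 := Subtype.ext <| by
    refine eq_zero_of_forall_mem_maximal fun m => ?_
    rw [← A.subtype_apply, map_prod]
    exact Ideal.mem_of_dvd _ (Finset.dvd_prod_of_mem _ (Finset.mem_univ m)) (hem m)
  obtain ⟨m, -, hm⟩ := Finset.prod_eq_zero_iff.1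
    ((map_prod χ _ _).symm.trans ((congrArg χ hprod).trans (map_zero χ)))
  have hm : χ (b m) = 1 := (sub_eq_zero.1 (by simpa using hm)).symm
  let b' : A := ⟨g • e m, hA _ <| by rw [IsIdempotentElem, ← smul_mul', (he m).eq]⟩
  have hne : e m * g • e m ≠ 0 := fun h => by
    have : χ (b m * b') = 0 := by rw [show b m * b' = 0 from Subtype.ext h, map_zero]
    rw [map_mul, hχ (b m) b' rfl, hm, one_mul] at this
    exact one_ne_zero this
  obtain ⟨m', hm'⟩ : ∃ m' : MaximalSpectrum F, e m * g • e m ∉ m'.asIdeal := by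
    by_contra! h
    exact hne (eq_zero_of_forall_mem_maximal h)
  obtain rfl : m' = m := by
    by_contra h
    exact hm' (Ideal.mul_mem_right _ _ (hem' m m' h))
  have hmax : (g⁻¹ • m'.asIdeal).IsMaximal :=
    (IsArtinianRing.isPrime_iff_isMaximal _).1 (m'.isMaximal.isPrime.smul g⁻¹)
  refine ⟨m', inv_smul_eq_iff.1 ?_ |>.symm⟩
  by_contra h
  have hmem := hem' m' ⟨_, hmax⟩ fun h' => h (congrArg MaximalSpectrum.asIdeal h')
  exact hm' (Ideal.mul_mem_left _ _ (Ideal.mem_inv_pointwise_smul_iff.1 hmem))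

end Artinian

theorem isField_of_isInvariant {G E F : Type*} [Group G] [Finite G] [Field E] [CommRing F]
    [Nontrivial F] [Algebra E F] [Module.Finite E F] [IsReduced F] [MulSemiringAction G F]
    [SMulCommClass G E F] [Algebra.IsInvariant E F G]
    (hfix : ∀ g : G, ∃ m : MaximalSpectrum F, g • m.asIdeal = m.asIdeal) : IsField F := by
  have : IsArtinianRing F := IsArtinianRing.of_finite E F
  obtain ⟨I₀, hI₀⟩ := Ideal.exists_maximal F
  have horbit : ∀ I : Ideal F, I.IsMaximal → I ∈ MulAction.orbit G I₀ := by
    intro I hI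
    have := hI₀.isPrime
    have := hI.isPrime
    have under_eq_bot : ∀ J : Ideal F, J.IsPrime → J.under E = ⊥ := fun J hJ =>
      (Ideal.eq_bot_or_top _).resolve_right (inferInstance : (J.under E).IsPrime).ne_top
    obtain ⟨g, hg⟩ := Algebra.IsInvariant.exists_smul_of_under_eq E F G I₀ I
      ((under_eq_bot _ ‹_›).trans (under_eq_bot _ ‹_›).symm)
    exact ⟨g, hg.symm⟩
  have : Finite (MulAction.orbit G I₀) := Set.finite_range fun g : G => g • I₀
  have hsub : Subsingleton (MulAction.orbit G I₀) :=
    subsingleton_of_forall_exists_smul_eq fun g =>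
      have ⟨m, hm⟩ := hfix g
      ⟨⟨m.asIdeal, horbit _ m.isMaximal⟩, Subtype.ext hm⟩
  have : IsLocalRing F := .of_unique_max_ideal ⟨I₀, hI₀, fun I hI =>
    congrArg Subtype.val (hsub.elim ⟨I, horbit I hI⟩ ⟨I₀, horbit I₀ hI₀⟩)⟩
  exact IsArtinianRing.isField_of_isReduced_of_isLocalRing F

section ResidueCharacters

variable {A F κ ι : Type*} [CommRing A] [CommRing F] [Field κ] {j : A →+* F} {L : ι → A →+* κ}
  {z : A}

theorem isReduced_of_forall_dvd [IsNoetherianRing A] (hj : Function.Injective j)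
    (hjz : IsUnit (j z)) (hden : ∀ f : F, ∃ m b, j z ^ m * f = j b)
    (hker : ∀ f, (∀ p, L p f = 0) → z ∣ f) (hz : z ∈ (⊥ : Ideal A).jacobson) : IsReduced F := by
  have hnil : nilradical A = ⊥ := by
    refine Submodule.eq_bot_of_le_smul_of_le_jacobson_bot (Ideal.span {z}) _
      (IsNoetherian.noetherian _) (fun f hf => ?_) (by simpa [Ideal.span_le] using hz)
    obtain ⟨b, rfl⟩ := hker f fun p => (IsNilpotent.map (mem_nilradical.1 hf) (L p)).eq_zero
    have hjb : IsNilpotent (j b) := by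
      have := IsNilpotent.map (mem_nilradical.1 hf) j
      rw [map_mul] at this
      exact (Commute.isNilpotent_mul_left_iff (.all _ _)
        hjz.mem_nonZeroDivisors.1).1 this
    exact Submodule.smul_mem_smul (Ideal.mem_span_singleton_self z)
      (mem_nilradical.2 ((IsNilpotent.map_iff hj).1 hjb))
  refine ⟨fun f hf => ?_⟩
  obtain ⟨m, b, hb⟩ := hden f
  have hb0 : b ∈ nilradical A := mem_nilradical.2 <| (IsNilpotent.map_iff hj).1 <| by
    rw [← hb]
    exact Commute.isNilpotent_mul_left (.all _ _) hf
  rw [hnil, Ideal.mem_bot] at hb0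
  exact (hjz.pow m).mul_right_eq_zero.1 (by rw [hb, hb0, map_zero])

/- If every `L p` kills `f`, then `f` is divisible by `z`: this lets one cancel the powers of `z`
in the denominator of an idempotent one at a time. -/
theorem mem_range_of_isIdempotentElem (hj : Function.Injective j) (hjz : IsUnit (j z))
    (hden : ∀ f : F, ∃ m b, j z ^ m * f = j b) (hz : ∀ p, L p z = 0)
    (hker : ∀ f, (∀ p, L p f = 0) → z ∣ f) {e : F} (he : IsIdempotentElem e) :
    e ∈ j.range := by
  obtain ⟨m, b, hb⟩ := hden e
  induction m generalizing b with
  | zero => exact ⟨b, by simpa using hb.symm⟩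
  | succ m ih =>
    have hbb : b * b = z ^ (m + 1) * b := hj <| by
      rw [map_mul, map_mul, ← hb, map_pow]
      linear_combination (j z ^ (m + 1)) ^ 2 * he.eq
    obtain ⟨c, rfl⟩ := hker b fun p => by
      have := congrArg (L p) hbb
      simpa only [map_mul, map_pow, hz, zero_pow m.succ_ne_zero, zero_mul, mul_self_eq_zero]
        using this
    refine ih c (hjz.mul_left_cancel ?_)
    rw [← mul_assoc, ← pow_succ', hb, map_mul]

end ResidueCharacters

end FieldCriterion

/-! ### Normal orders -/

section StructureConstants

variable {G : Type*} [Fintype G] {R R' : Type*} [CommRing R'] [CommRing R]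

/-- The bilinear product on `G → R` whose structure constants on the standard basis are `γ`. -/
noncomputable def structMul (γ : G → G → G → R) : (G → R) →ₗ[R] (G → R) →ₗ[R] G → R :=
  Fintype.linearCombination R fun h => Fintype.linearCombination R (γ h)

theorem structMul_apply (γ : G → G → G → R) (p q : G → R) (l : G) :
    structMul γ p q l = ∑ h, ∑ h', p h * (q h' * γ h h' l) := by
  simp [structMul, Fintype.linearCombination_apply, Finset.mul_sum]

theorem map_structMul (φ : R →+* R') (γ : G → G → G → R) (p q : G → R) :
    φ ∘ structMul γ p q = structMul (fun h h' => φ ∘ γ h h') (φ ∘ p) (φ ∘ q) := by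
  funext l
  simp [structMul_apply]

theorem structMul_comm {γ : G → G → G → R} (hγ : ∀ h h', γ h h' = γ h' h) (p q : G → R) :
    structMul γ p q = structMul γ q p := by
  funext l
  rw [structMul_apply, structMul_apply, Finset.sum_comm]
  exact Finset.sum_congr rfl fun h _ => Finset.sum_congr rfl fun h' _ => by
    rw [hγ h' h, mul_left_comm]

variable [DecidableEq G]

theorem structMul_single_single (γ : G → G → G → R) (h h' : G) :
    structMul γ (Pi.single h 1) (Pi.single h' 1) = γ h h' := by
  simp [structMul, Fintype.linearCombination_apply_single]

omit [Fintype G] in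
theorem comp_single_one (φ : R →+* R') (h : G) :
    φ ∘ (Pi.single h 1 : G → R) = Pi.single h 1 := by
  funext l
  simp [Pi.single_apply, apply_ite φ]

theorem structMul_assoc {γ : G → G → G → R}
    (hγ : ∀ h h' h'', structMul γ (γ h h') (Pi.single h'' 1) =
      structMul γ (Pi.single h 1) (γ h' h'')) (p q r : G → R) :
    structMul γ (structMul γ p q) r = structMul γ p (structMul γ q r) := by
  have hbasis : ∀ h h',
      structMul γ (γ h h') = structMul γ (Pi.single h 1) ∘ₗ structMul γ (Pi.single h' 1) :=
    fun h h' => (Pi.basisFun R G).ext fun h'' => by simp [structMul_single_single, hγ]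
  have : (structMul γ).compr₂ ((structMul γ).flip r) =
      (structMul γ).compl₂ ((structMul γ).flip r) :=
    LinearMap.ext_basis (Pi.basisFun R G) (Pi.basisFun R G) fun h h' => by
      simp [structMul_single_single, hbasis]
  exact LinearMap.congr_fun₂ this p q

end StructureConstants

/-- Structure constants `γ` of a commutative associative product `⋆` on the free module `G → R`,
invariant under left translation by `G`. It need not be unital, but `d ⋆ f = D • f`, so that it
has the unit `D⁻¹ • d` once `D` is inverted. -/
structure NormalOrder (G R : Type*) [Group G] [Fintype G] [DecidableEq G] [CommRing R] where
  γ : G → G → G → R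
  d : G → R
  D : R
  comm : ∀ h h', γ h h' = γ h' h
  assoc : ∀ h h' h'', structMul γ (γ h h') (Pi.single h'' 1) =
    structMul γ (Pi.single h 1) (γ h' h'')
  d_mul : ∀ h, structMul γ d (Pi.single h 1) = D • Pi.single h 1
  equivariant : ∀ s h h' l, γ (s * h) (s * h') (s * l) = γ h h' l

namespace NormalOrder

variable {G : Type*} [Group G] [Fintype G] [DecidableEq G]
variable {R R' : Type*} [CommRing R] [CommRing R'] (S : NormalOrder G R)

/-- Base change of a normal order. -/
def map (φ : R →+* R') : NormalOrder G R' where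
  γ h h' := φ ∘ S.γ h h'
  d := φ ∘ S.d
  D := φ S.D
  comm h h' := by rw [S.comm]
  assoc h h' h'' := by
    have := congrArg (φ ∘ ·) (S.assoc h h' h'')
    simpa only [map_structMul, comp_single_one] using this
  d_mul h := by
    have := congrArg (φ ∘ ·) (S.d_mul h)
    simp only [map_structMul, comp_single_one] at this
    rw [this, ← comp_single_one φ]
    funext l
    exact map_mul φ _ _
  equivariant s h h' l := congrArg φ (S.equivariant s h h' l)

theorem isUnit_map_D (hD : IsUnit S.D) (φ : R →+* R') : IsUnit (S.map φ).D := hD.map φ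

theorem structMul_d (f : G → R) : structMul S.γ S.d f = S.D • f := by
  have : structMul S.γ S.d = S.D • LinearMap.id :=
    (Pi.basisFun R G).ext fun h => by simpa using S.d_mul h
  exact LinearMap.congr_fun this f

theorem structMul_translate (s : G) (p q : G → R) (l : G) :
    structMul S.γ p q (s * l) = structMul S.γ (fun h => p (s * h)) (fun h => q (s * h)) l := by
  simp only [structMul_apply]
  rw [← Equiv.sum_comp (Equiv.mulLeft s)]
  refine Finset.sum_congr rfl fun h _ => ?_
  rw [← Equiv.sum_comp (Equiv.mulLeft s)]
  simp only [Equiv.coe_mulLeft, S.equivariant]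

theorem structMul_inv_smul_d (hD : IsUnit S.D) (f : G → R) :
    structMul S.γ ((↑hD.unit⁻¹ : R) • S.d) f = f := by
  rw [LinearMap.map_smul₂, structMul_d, smul_smul, hD.val_inv_mul, one_smul]

/-- The commutative algebra with normal basis defined by a normal order with `D` invertible. -/
def Alg (_ : IsUnit S.D) : Type _ := G → R

namespace Alg

variable {S} {hD : IsUnit S.D}

noncomputable instance : AddCommGroup (S.Alg hD) := inferInstanceAs (AddCommGroup (G → R))
noncomputable instance : Module R (S.Alg hD) := inferInstanceAs (Module R (G → R))
instance : Module.Finite R (S.Alg hD) := inferInstanceAs (Module.Finite R (G → R))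
instance [Nontrivial R] : Nontrivial (S.Alg hD) := inferInstanceAs (Nontrivial (G → R))

/-- The coordinates of an element of `S.Alg hD` in its normal basis. -/
def coords : S.Alg hD ≃ₗ[R] (G → R) := LinearEquiv.refl R (G → R)

noncomputable instance : Mul (S.Alg hD) :=
  ⟨fun f f' => coords.symm (structMul S.γ (coords f) (coords f'))⟩

noncomputable instance : One (S.Alg hD) := ⟨coords.symm ((↑hD.unit⁻¹ : R) • S.d)⟩

theorem coords_mul (f f' : S.Alg hD) : coords (f * f') = structMul S.γ (coords f) (coords f') :=
  rfl

theorem coords_one : coords (1 : S.Alg hD) = (↑hD.unit⁻¹ : R) • S.d := rfl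

theorem D_smul_one : S.D • (1 : S.Alg hD) = coords.symm S.d := by
  rw [← coords.symm_apply_apply 1, ← map_smul, coords_one, smul_smul, hD.mul_val_inv, one_smul]

protected theorem mul_comm (f f' : S.Alg hD) : f * f' = f' * f :=
  congrArg coords.symm (structMul_comm S.comm (coords f) (coords f'))

protected theorem one_mul (f : S.Alg hD) : 1 * f = f :=
  congrArg coords.symm (S.structMul_inv_smul_d hD (coords f))

noncomputable instance : CommRing (S.Alg hD) where
  __ := (inferInstance : AddCommGroup (S.Alg hD))
  left_distrib f := map_add (structMul S.γ (coords f))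
  right_distrib := LinearMap.map_add₂ (structMul S.γ)
  zero_mul := LinearMap.map_zero₂ (structMul S.γ)
  mul_zero f := map_zero (structMul S.γ (coords f))
  mul_assoc := structMul_assoc S.assoc
  mul_comm := Alg.mul_comm
  one_mul := Alg.one_mul
  mul_one f := (Alg.mul_comm f 1).trans (Alg.one_mul f)

noncomputable instance : Algebra R (S.Alg hD) :=
  Algebra.ofModule (fun r f f' => LinearMap.map_smul₂ (structMul S.γ) r (coords f) (coords f'))
    fun r f f' => map_smul (structMul S.γ (coords f)) r (coords f')

noncomputable instance : SMul G (S.Alg hD) :=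
  ⟨fun s f => coords.symm fun h => coords f (s⁻¹ * h)⟩

theorem coords_group_smul (s : G) (f : S.Alg hD) (h : G) : coords (s • f) h = coords f (s⁻¹ * h) :=
  rfl

theorem group_smul_mul (s : G) (f f' : S.Alg hD) : s • (f * f') = s • f * s • f' :=
  coords.injective <| funext fun l => S.structMul_translate s⁻¹ (coords f) (coords f') l

noncomputable instance : DistribMulAction G (S.Alg hD) where
  one_smul f := coords.injective <| funext fun h => by rw [coords_group_smul, inv_one, one_mul]
  mul_smul s t f := coords.injective <| funext fun h => by
    simp only [coords_group_smul, mul_inv_rev, mul_assoc]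
  smul_zero _ := rfl
  smul_add _ _ _ := rfl

noncomputable instance : MulSemiringAction G (S.Alg hD) where
  smul_one s := by
    calc s • (1 : S.Alg hD) = s • 1 * s • s⁻¹ • 1 := by rw [smul_inv_smul, mul_one]
      _ = s • s⁻¹ • 1 := by rw [← group_smul_mul, one_mul]
      _ = 1 := smul_inv_smul s 1
  smul_mul := group_smul_mul

instance : SMulCommClass G R (S.Alg hD) := ⟨fun _ _ _ => rfl⟩

instance [Nontrivial R] : FaithfulSMul G (S.Alg hD) where
  eq_of_smul_eq_smul {s t} h := by
    have hst := congrFun (congrArg coords (h (coords.symm (Pi.single 1 1)))) s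
    simp only [coords_group_smul, LinearEquiv.apply_symm_apply, inv_mul_cancel,
      Pi.single_eq_same] at hst
    by_contra hne
    rw [Pi.single_eq_of_ne fun h => hne (inv_mul_eq_one.1 h).symm] at hst
    exact one_ne_zero hst

/- An invariant element has all its coordinates equal, just as the unit does. -/
instance : Algebra.IsInvariant R (S.Alg hD) G where
  isInvariant f hf := by
    have hconst : ∀ {f : S.Alg hD}, (∀ s : G, s • f = f) → ∀ l, coords f l = coords f 1 := by
      intro f hf l
      rw [← congrFun (congrArg coords (hf l)) l, coords_group_smul, inv_mul_cancel]
    have hone := hconst (fun s => smul_one s : ∀ s : G, s • (1 : S.Alg hD) = 1)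
    obtain ⟨e, he⟩ : ∃ e, e * coords (1 : S.Alg hD) 1 = 1 := by
      have := congrFun (S.structMul_inv_smul_d hD (Pi.single 1 1)) 1
      rw [← coords_one, structMul_apply] at this
      simp only [hone, ← Finset.mul_sum, Pi.single_eq_same] at this
      exact (IsUnit.of_mul_eq_one _ this).exists_left_inv
    refine ⟨coords f 1 * e, coords.injective <| funext fun l => ?_⟩
    rw [Algebra.algebraMap_eq_smul_one, map_smul, Pi.smul_apply, smul_eq_mul, hone, mul_assoc, he,
      mul_one, ← hconst hf]

/-- Base change as a ring homomorphism. -/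
noncomputable def mapHom (hD : IsUnit S.D) (φ : R →+* R') :
    S.Alg hD →+* (S.map φ).Alg (S.isUnit_map_D hD φ) where
  toFun f := coords.symm (φ ∘ coords f)
  map_zero' := coords.injective <| funext fun _ => map_zero φ
  map_add' f f' := coords.injective <| funext fun _ => map_add φ _ _
  map_mul' f f' := coords.injective (map_structMul φ S.γ (coords f) (coords f'))
  map_one' := by
    have hinv : φ ↑hD.unit⁻¹ = ↑(S.isUnit_map_D hD φ).unit⁻¹ :=
      Units.eq_inv_of_mul_eq_one_left ((map_mul φ _ _).symm.trans (by simp))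
    exact coords.injective <| funext fun l =>
      (map_mul φ _ _).trans (congrArg (· * φ (S.d l)) hinv)

theorem mapHom_smul (φ : R →+* R') (c : R) (f : S.Alg hD) :
    mapHom hD φ (c • f) = φ c • mapHom hD φ f :=
  coords.injective <| funext fun l => map_mul φ c (coords f l)

theorem mapHom_injective {φ : R →+* R'} (hφ : Function.Injective φ) :
    Function.Injective (mapHom hD φ) := fun _ _ h =>
  coords.injective (hφ.comp_left h)

theorem group_smul_mapHom (φ : R →+* R') (s : G) (f : S.Alg hD) :
    mapHom hD φ (s • f) = s • mapHom hD φ f :=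
  rfl

end Alg
end NormalOrder

/-! ### Branch points -/

section Branch

open Matrix

variable {G : Type*} [Group G] [Fintype G] [DecidableEq G]

/-- A point of the fibre of a normal order fixed by `g`, given by the character `lam`, such that
the nilpotent element `z` generates the intersection of the kernels of the translates of `lam`. -/
structure FibrePoint {R : Type*} [CommRing R] (S : NormalOrder G R) (g : G) (z : G → R) where
  lam : G → R
  i : G → G → R
  r : G → G → R
  lam_mul_left : ∀ h, lam (g * h) = lam h
  lam_mul : ∀ h h', S.γ h h' ⬝ᵥ lam = lam h * lam h'
  lam_d : S.d ⬝ᵥ lam = S.D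
  lam_z : ∀ p, (z ⬝ᵥ fun h => lam (p⁻¹ * h)) = 0
  pow_z : ∃ n, (structMul S.γ z)^[n] S.d = 0
  decomp : ∀ h, S.D • Pi.single h 1 = ∑ p, lam (p⁻¹ * h) • i p + structMul S.γ z (r h)

namespace FibrePoint

variable {κ : Type*} [Field κ] {S : NormalOrder G κ} {g : G} {z : G → κ}
  (P : FibrePoint S g z) (hD : IsUnit S.D)

open NormalOrder.Alg Pointwise

theorem structMul_dotProduct_lam (p q : G → κ) :
    structMul S.γ p q ⬝ᵥ P.lam = (p ⬝ᵥ P.lam) * (q ⬝ᵥ P.lam) := by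
  have : ∀ q : G → κ, q ⬝ᵥ P.lam = Fintype.linearCombination κ P.lam q := fun q => by
    simp [dotProduct, Fintype.linearCombination_apply]
  simp only [this]
  have : (structMul S.γ).compr₂ (Fintype.linearCombination κ P.lam) =
      (LinearMap.mul κ κ).compl₁₂ (Fintype.linearCombination κ P.lam)
        (Fintype.linearCombination κ P.lam) :=
    LinearMap.ext_basis (Pi.basisFun κ G) (Pi.basisFun κ G) fun h h' => by
      simp [structMul_single_single, ← this, P.lam_mul]
  exact LinearMap.congr_fun₂ this p q

/-- The character `lam` as a ring homomorphism. -/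
noncomputable def character : S.Alg hD →+* κ where
  toFun f := coords f ⬝ᵥ P.lam
  map_zero' := zero_dotProduct _
  map_add' _ _ := add_dotProduct _ _ _
  map_mul' _ _ := P.structMul_dotProduct_lam _ _
  map_one' := by rw [coords_one, smul_dotProduct, P.lam_d, smul_eq_mul, hD.val_inv_mul]

theorem character_smul (f : S.Alg hD) : P.character hD (g • f) = P.character hD f := by
  change ∑ h, coords f (g⁻¹ * h) * P.lam h = ∑ h, coords f h * P.lam h
  rw [← Equiv.sum_comp (Equiv.mulLeft g)]
  simp [P.lam_mul_left]

theorem character_inv_smul (p : G) (f : S.Alg hD) :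
    P.character hD (p⁻¹ • f) = coords f ⬝ᵥ fun h => P.lam (p⁻¹ * h) := by
  change ∑ h, coords f (p⁻¹⁻¹ * h) * P.lam h = ∑ h, coords f h * P.lam (p⁻¹ * h)
  rw [← Equiv.sum_comp (Equiv.mulLeft p⁻¹)]
  simp

include P in
theorem isNilpotent_z : IsNilpotent (coords.symm z : S.Alg hD) := by
  obtain ⟨n, hn⟩ := P.pow_z
  have hpow : ∀ m, coords ((coords.symm z : S.Alg hD) ^ m * coords.symm S.d) =
      (structMul S.γ z)^[m] S.d := by
    intro m
    induction m with
    | zero => rw [pow_zero, one_mul]; rfl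
    | succ m ih => rw [pow_succ', mul_assoc, coords_mul, ih, Function.iterate_succ_apply']; rfl
  refine ⟨n, hD.smul_left_cancel.1 ?_⟩
  rw [smul_zero, ← mul_one (_ ^ n), ← mul_smul_comm, D_smul_one]
  exact coords.injective ((hpow n).trans hn)

theorem dvd_of_forall_character_eq_zero {f : S.Alg hD}
    (hf : ∀ p : G, P.character hD (p⁻¹ • f) = 0) : coords.symm z ∣ f := by
  have hsum : S.D • coords f = structMul S.γ z (∑ h, coords f h • P.r h) := by
    calc S.D • coords f = ∑ h, coords f h • S.D • Pi.single h 1 := by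
          simp only [smul_comm _ S.D, ← Finset.smul_sum]
          rw [← pi_eq_sum_univ' (coords f)]
      _ = ∑ p, (∑ h, coords f h * P.lam (p⁻¹ * h)) • P.i p +
          ∑ h, coords f h • structMul S.γ z (P.r h) := by
        simp only [P.decomp, smul_add, Finset.sum_add_distrib, Finset.smul_sum, Finset.sum_smul,
          smul_smul]
        rw [Finset.sum_comm]
      _ = structMul S.γ z (∑ h, coords f h • P.r h) := by
        simp only [character_inv_smul, dotProduct] at hf
        simp only [hf, zero_smul, Finset.sum_const_zero, zero_add, map_sum, map_smul]
  refine ⟨(↑hD.unit⁻¹ : κ) • coords.symm (∑ h, coords f h • P.r h), hD.smul_left_cancel.1 ?_⟩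
  rw [mul_smul_comm, smul_smul, hD.mul_val_inv, one_smul]
  exact coords.injective hsum

end FibrePoint

/-- A point of the fibre `ev` of a normal order fixed by `g`, together with an element `z` which
generates the ideal of all translates of that point and divides the equation `u` of the fibre. -/
structure Branch {O R : Type*} [CommRing O] [CommRing R] (S : NormalOrder G O) (ev : O →+* R)
    (u : O) (g : G) where
  z : G → O
  z' : G → O
  fibre : FibrePoint (S.map ev) g (ev ∘ z)
  mul_z' : ∀ l, u ^ 2 ∣ structMul S.γ z z' l - u * (S.D * S.d l)

namespace Branch

open NormalOrder.Alg Pointwise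

variable {O κ : Type*} [CommRing O] [Field κ] {S : NormalOrder G O} {ev : O →+* κ} {u : O} {g : G}
  (B : Branch S ev u g) (hD : IsUnit S.D)

theorem exists_eq_smul_of_mapHom_eq_zero (hker : RingHom.ker ev = Ideal.span {u}) {f : S.Alg hD}
    (hf : mapHom hD ev f = 0) : ∃ f', f = u • f' := by
  have : ∀ l, u ∣ coords f l := fun l => by
    rw [← Ideal.mem_span_singleton, ← hker]
    exact congrFun (congrArg coords hf) l
  choose q hq using this
  exact ⟨coords.symm q, coords.injective (funext hq)⟩

/-- The characters of the order at the translates of the point of a branch. -/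
noncomputable def character (p : G) : S.Alg hD →+* κ :=
  ((B.fibre.character (S.isUnit_map_D hD ev)).comp (mapHom hD ev)).comp
    (MulSemiringAction.toRingHom G _ p⁻¹)

theorem character_apply (p : G) (f : S.Alg hD) : B.character hD p f =
    B.fibre.character (S.isUnit_map_D hD ev) (p⁻¹ • mapHom hD ev f) :=
  rfl

theorem character_one_smul (f : S.Alg hD) : B.character hD 1 (g • f) = B.character hD 1 f := by
  simp only [character_apply, inv_one, one_smul, group_smul_mapHom, FibrePoint.character_smul]

theorem character_z (p : G) : B.character hD p (coords.symm B.z) = 0 :=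
  (B.fibre.character_inv_smul _ p _).trans (B.fibre.lam_z p)

variable (hker : RingHom.ker ev = Ideal.span {u})

include hker in
theorem exists_z_pow_eq_u_smul :
    ∃ n, ∃ f : S.Alg hD, (coords.symm B.z : S.Alg hD) ^ n = u • f := by
  obtain ⟨n, hn⟩ := B.fibre.isNilpotent_z (S.isUnit_map_D hD ev)
  exact ⟨n, exists_eq_smul_of_mapHom_eq_zero hD hker ((map_pow _ _ n).trans hn)⟩

variable [IsLocalRing O]

theorem smul_mem_jacobson (hu : u ∈ IsLocalRing.maximalIdeal O) (f : S.Alg hD) :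
    u • f ∈ (⊥ : Ideal (S.Alg hD)).jacobson := by
  rw [Algebra.smul_def]
  refine Ideal.mul_mem_right _ _ (Ideal.mem_sInf.2 fun {I} ⟨_, hI⟩ => ?_)
  rwa [← IsLocalRing.eq_maximalIdeal (Ideal.isMaximal_comap_of_isIntegral_of_isMaximal (R := O) I)]
    at hu

include hker in
theorem u_mem_maximalIdeal : u ∈ IsLocalRing.maximalIdeal O :=
  IsLocalRing.le_maximalIdeal (RingHom.ker_ne_top ev) (hker ▸ Ideal.mem_span_singleton_self u)

include hker in
theorem z_dvd_u_smul (f : S.Alg hD) : coords.symm B.z ∣ u • f := by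
  choose ρ hρ using B.mul_z'
  have hmul : (coords.symm B.z * coords.symm B.z' : S.Alg hD) =
      u • (S.D • S.D • 1 + u • coords.symm ρ) := by
    rw [D_smul_one]
    refine coords.injective <| funext fun l => (sub_eq_iff_eq_add.1 (hρ l)).trans ?_
    change u ^ 2 * ρ l + u * (S.D * S.d l) = u * (S.D * S.d l + u * ρ l)
    ring
  have hunit : IsUnit (S.D • S.D • 1 + u • coords.symm ρ : S.Alg hD) := by
    obtain ⟨e, he⟩ := (hD.mul hD).exists_left_inv
    have := Ideal.mem_jacobson_bot.1
      (smul_mem_jacobson hD (u_mem_maximalIdeal hker) (coords.symm ρ)) (e • 1)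
    rw [mul_smul_comm, mul_one] at this
    convert ((hD.mul hD).map (algebraMap O (S.Alg hD))).mul this using 1
    rw [← Algebra.smul_def, smul_add, smul_smul _ e, mul_comm (S.D * S.D), he, one_smul, smul_smul,
      add_comm]
  obtain ⟨e, he⟩ := hunit.exists_right_inv
  refine ⟨coords.symm B.z' * e * f, ?_⟩
  rw [← mul_assoc, ← mul_assoc, hmul, smul_mul_assoc, he, smul_mul_assoc, one_mul]

include hker in
theorem z_mem_jacobson : (coords.symm B.z : S.Alg hD) ∈ (⊥ : Ideal (S.Alg hD)).jacobson := by
  obtain ⟨n, f, hf⟩ := B.exists_z_pow_eq_u_smul hD hker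
  refine Ideal.isRadical_jacobson _ ⟨n, ?_⟩
  rw [hf]
  exact smul_mem_jacobson hD (u_mem_maximalIdeal hker) f

include hker in
theorem z_dvd_of_forall_character_eq_zero (hev : Function.Surjective ev) {f : S.Alg hD}
    (hf : ∀ p, B.character hD p f = 0) : coords.symm B.z ∣ f := by
  obtain ⟨r, hr⟩ := B.fibre.dvd_of_forall_character_eq_zero (S.isUnit_map_D hD ev)
    (f := mapHom hD ev f) hf
  obtain ⟨r', hr'⟩ := hev.comp_left (coords r)
  obtain ⟨f', hf'⟩ := exists_eq_smul_of_mapHom_eq_zero hD hker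
    (f := f - coords.symm B.z * coords.symm r') (by
      rw [map_sub, hr, map_mul, sub_eq_zero]
      exact congrArg (coords.symm (ev ∘ B.z) * ·) (coords.injective hr'.symm))
  rw [sub_eq_iff_eq_add.1 hf']
  exact dvd_add (B.z_dvd_u_smul hD hker f') (dvd_mul_right _ _)

end Branch

namespace Branch

open NormalOrder.Alg Pointwise

variable {O K κ : Type*} [CommRing O] [IsDomain O] [IsDiscreteValuationRing O]
  [Field K] [Algebra O K] [IsFractionRing O K] [Field κ] {S : NormalOrder G O}
  {ev : O →+* κ} {u : O} {g : G} (B : Branch S ev u g) (hD : IsUnit S.D)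
  (hker : RingHom.ker ev = Ideal.span {u})

include hker in
theorem isUnit_mapHom_z (hu : Irreducible u) :
    IsUnit (mapHom hD (algebraMap O K) (coords.symm B.z)) := by
  obtain ⟨w, hw⟩ := B.z_dvd_u_smul hD hker 1
  have huK : IsUnit (algebraMap O K u) :=
    ((map_ne_zero_iff _ (IsFractionRing.injective O K)).2 hu.ne_zero).isUnit
  apply isUnit_of_mul_isUnit_left (y := mapHom hD (algebraMap O K) w)
  rw [← map_mul, ← hw, mapHom_smul, map_one, ← Algebra.algebraMap_eq_smul_one]
  exact huK.map _

include hker in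
theorem exists_z_pow_mul_eq (hu : Irreducible u)
    (f : (S.map (algebraMap O K)).Alg (S.isUnit_map_D hD _)) :
    ∃ m b, mapHom hD (algebraMap O K) (coords.symm B.z) ^ m * f = mapHom hD (algebraMap O K) b := by
  obtain ⟨⟨c, hc⟩, hcf⟩ := IsLocalization.exist_integer_multiples_of_finite
    (nonZeroDivisors O) (coords f)
  choose f₀ hf₀ using hcf
  obtain ⟨m, hm⟩ := IsDiscreteValuationRing.associated_pow_irreducible
    (nonZeroDivisors.ne_zero hc) hu
  obtain ⟨e, he⟩ := hm.dvd
  obtain ⟨n, s, hs⟩ := B.exists_z_pow_eq_u_smul hD hker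
  refine ⟨n * m, s ^ m * coords.symm fun h => e * f₀ h, ?_⟩
  have hf : mapHom hD (algebraMap O K) (coords.symm fun h => e * f₀ h) =
      algebraMap O K (u ^ m) • f := by
    rw [he]
    refine coords.injective <| funext fun h => ?_
    change algebraMap O K (e * f₀ h) = algebraMap O K (c * e) * coords f h
    rw [map_mul, map_mul, hf₀, Algebra.smul_def]
    ring
  rw [pow_mul, ← map_pow, hs, mapHom_smul, _root_.smul_pow, map_mul, hf, map_pow, map_pow,
    mul_smul_comm, smul_mul_assoc]

include B hker in
theorem isReduced (hu : Irreducible u) (hev : Function.Surjective ev) :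
    IsReduced ((S.map (algebraMap O K)).Alg (S.isUnit_map_D hD _)) :=
  have : IsNoetherianRing (S.Alg hD) := IsNoetherianRing.of_finite O _
  isReduced_of_forall_dvd (mapHom_injective (IsFractionRing.injective O K))
    (B.isUnit_mapHom_z hD hker hu) (B.exists_z_pow_mul_eq hD hker hu)
    (fun _ => B.z_dvd_of_forall_character_eq_zero hD hker hev) (B.z_mem_jacobson hD hker)

include B hker in
theorem exists_smul_maximal_eq (hu : Irreducible u) (hev : Function.Surjective ev) :
    ∃ m : MaximalSpectrum ((S.map (algebraMap O K)).Alg (S.isUnit_map_D hD _)),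
      g • m.asIdeal = m.asIdeal := by
  have := B.isReduced (K := K) hD hker hu hev
  have : IsArtinianRing ((S.map (algebraMap O K)).Alg (S.isUnit_map_D hD _)) :=
    IsArtinianRing.of_finite K _
  have hj : Function.Injective (mapHom hD (algebraMap O K)) :=
    mapHom_injective (IsFractionRing.injective O K)
  let e := RingEquiv.ofBijective (mapHom hD (algebraMap O K)).rangeRestrict
    ⟨fun _ _ h => hj (congrArg Subtype.val h), RingHom.rangeRestrict_surjective _⟩
  refine Patching.exists_smul_maximal_eq g (mapHom hD (algebraMap O K)).range
    ((B.character hD 1).comp e.symm.toRingHom) (fun e he => ?_) fun b b' hb => ?_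
  · exact mem_range_of_isIdempotentElem hj (B.isUnit_mapHom_z hD hker hu)
      (B.exists_z_pow_mul_eq hD hker hu) (B.character_z hD)
      (fun _ => B.z_dvd_of_forall_character_eq_zero hD hker hev) he
  · obtain ⟨f, rfl⟩ := e.surjective b
    obtain ⟨f', rfl⟩ := e.surjective b'
    obtain rfl : f' = g • f := hj hb
    simp only [RingHom.comp_apply, RingEquiv.toRingHom_eq_coe, RingHom.coe_coe,
      e.symm_apply_apply, B.character_one_smul]

end Branch

end Branch

/-! ### Specialization -/

section Specialization

open Matrix

variable {G : Type*} [Group G] [Fintype G] [DecidableEq G] {R R' : Type*} [CommRing R]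
  [CommRing R'] {g : G}

theorem map_decomp (φ : R →+* R') {D : R} {lam : G → R} {i r : G → G → R} {γ : G → G → G → R}
    {z : G → R} (h : G) :
    φ ∘ (D • Pi.single h 1 - (∑ p, lam (p⁻¹ * h) • i p + structMul γ z (r h))) =
      φ D • Pi.single h 1 - (∑ p, φ (lam (p⁻¹ * h)) • φ ∘ i p +
        structMul (fun h h' => φ ∘ γ h h') (φ ∘ z) (φ ∘ r h)) := by
  rw [← map_structMul, ← comp_single_one φ]
  funext l
  simp

omit [Group G] [DecidableEq G] in
theorem map_iterate_structMul (φ : R →+* R') (γ : G → G → G → R) (z d : G → R) (n : ℕ) :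
    φ ∘ (structMul γ z)^[n] d = (structMul (fun h h' => φ ∘ γ h h') (φ ∘ z))^[n] (φ ∘ d) := by
  induction n with
  | zero => rfl
  | succ n ih => rw [Function.iterate_succ_apply', Function.iterate_succ_apply', map_structMul, ih]

/-- Base change of a point of the fibre. -/
def FibrePoint.map {S : NormalOrder G R} {z : G → R} (P : FibrePoint S g z) (φ : R →+* R') :
    FibrePoint (S.map φ) g (φ ∘ z) where
  lam := φ ∘ P.lam
  i p := φ ∘ P.i p
  r h := φ ∘ P.r h
  lam_mul_left h := congrArg φ (P.lam_mul_left h)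
  lam_mul h h' := by
    rw [Function.comp_apply, Function.comp_apply, ← map_mul, ← P.lam_mul]
    exact (φ.map_dotProduct _ _).symm
  lam_d := (φ.map_dotProduct _ _).symm.trans (congrArg φ P.lam_d)
  lam_z p := (φ.map_dotProduct _ _).symm.trans ((congrArg φ (P.lam_z p)).trans (map_zero φ))
  pow_z := by
    obtain ⟨n, hn⟩ := P.pow_z
    refine ⟨n, (map_iterate_structMul φ _ _ _ n).symm.trans ?_⟩
    rw [hn]
    exact funext fun _ => map_zero φ
  decomp h := sub_eq_zero.1 <| (map_decomp φ h).symm.trans <| by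
    rw [sub_eq_zero.2 (P.decomp h)]
    exact funext fun _ => map_zero φ

theorem FibrePoint.nonempty_of_map {S : NormalOrder G R} {S' : NormalOrder G R'} {z : G → R}
    {z' : G → R'} {φ : R →+* R'} (hφ : Function.Injective φ) (hS : S.map φ = S') (hz : φ ∘ z = z')
    (P : FibrePoint S' g z')
    (hlam : ∀ h, P.lam h ∈ φ.range) (hi : ∀ p h, P.i p h ∈ φ.range)
    (hr : ∀ h h', P.r h h' ∈ φ.range) : Nonempty (FibrePoint S g z) := by
  subst hS hz
  choose lam hlam using hlam
  choose i hi using hi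
  choose r hr using hr
  replace hlam : φ ∘ lam = P.lam := funext hlam
  refine ⟨⟨lam, i, r, fun h => hφ ?_, fun h h' => hφ ?_, hφ ?_, fun p => hφ ?_, ?_, fun h => ?_⟩⟩
  · simpa only [← hlam, Function.comp_apply] using P.lam_mul_left h
  · rw [map_mul, φ.map_dotProduct, ← Function.comp_apply (f := φ) (g := lam),
      ← Function.comp_apply (f := φ) (g := lam), hlam]
    exact P.lam_mul h h'
  · rw [φ.map_dotProduct, hlam]
    exact P.lam_d
  · rw [map_zero, φ.map_dotProduct, ← P.lam_z p, ← hlam]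
    rfl
  · obtain ⟨n, hn⟩ := P.pow_z
    refine ⟨n, hφ.comp_left <| (map_iterate_structMul φ _ _ _ n).trans (hn.trans ?_)⟩
    exact funext fun _ => (map_zero φ).symm
  · refine sub_eq_zero.1 (hφ.comp_left ((map_decomp φ h).trans ?_))
    simp only [show ∀ p, φ ∘ i p = P.i p from fun p => funext (hi p),
      show ∀ h, φ ∘ r h = P.r h from fun h => funext (hr h),
      show ∀ h, φ (lam h) = P.lam h from congrFun hlam]
    exact (sub_eq_zero.2 (P.decomp h)).trans (funext fun _ => (map_zero φ).symm)

theorem NormalOrder.exists_map_eq {φ : R →+* R'} (hφ : Function.Injective φ)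
    (S : NormalOrder G R') (hγ : ∀ h h' l, S.γ h h' l ∈ φ.range) (hd : ∀ h, S.d h ∈ φ.range)
    (hD : S.D ∈ φ.range) : ∃ S' : NormalOrder G R, S'.map φ = S := by
  obtain ⟨γ', d', D', comm, assoc, d_mul, equivariant⟩ := S
  choose γ hγ using hγ
  choose d hd using hd
  obtain ⟨D, rfl⟩ := hD
  obtain rfl : (fun h h' => φ ∘ γ h h') = γ' := funext₂ fun h h' => funext (hγ h h')
  obtain rfl : φ ∘ d = d' := funext hd
  refine ⟨⟨γ, d, D, fun h h' => hφ.comp_left (comm h h'), fun h h' h'' => hφ.comp_left ?_,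
    fun h => hφ.comp_left ?_, fun s h h' l => hφ (equivariant s h h' l)⟩, rfl⟩
  · simp only [map_structMul, comp_single_one]
    exact assoc h h' h''
  · refine (map_structMul φ _ _ _).trans ?_
    rw [comp_single_one, d_mul h, ← comp_single_one φ]
    exact funext fun _ => (map_mul φ _ _).symm

namespace Branch

variable {O O' : Type*} [CommRing O] [CommRing O'] {S : NormalOrder G O} {ev : O →+* R}
  {ev' : O' →+* R'} {u' : O'} {ι : O →+* O'} {φ : R →+* R'} {u : O}

/-- Base change of a branch. -/
def map (B : Branch S ev u g) (h : ev'.comp ι = φ.comp ev) (hu : ι u = u') :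
    Branch (S.map ι) ev' u' g where
  z := ι ∘ B.z
  z' := ι ∘ B.z'
  fibre := by
    have P : FibrePoint (S.map (φ.comp ev)) g (φ.comp ev ∘ B.z) := B.fibre.map φ
    rw [← h] at P
    exact P
  mul_z' l := by
    have := map_dvd ι (B.mul_z' l)
    rwa [map_pow, map_sub, map_mul, map_mul, ← Function.comp_apply (f := ι), map_structMul,
      hu] at this

theorem nonempty_of_map (hφ : Function.Injective φ) (h : ev'.comp ι = φ.comp ev)
    (hu : ι u = u') (hdvd : ∀ f, u' ^ 2 ∣ ι f → u ^ 2 ∣ f) (B : Branch (S.map ι) ev' u' g)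
    (hz : ∀ h, B.z h ∈ ι.range) (hz' : ∀ h, B.z' h ∈ ι.range)
    (hlam : ∀ h, B.fibre.lam h ∈ φ.range) (hi : ∀ p h, B.fibre.i p h ∈ φ.range)
    (hr : ∀ h h', B.fibre.r h h' ∈ φ.range) : Nonempty (Branch S ev u g) := by
  obtain ⟨z₁, z₁', P, mul_z'⟩ := B
  choose z hz using hz
  choose z' hz' using hz'
  obtain rfl : ι ∘ z = z₁ := funext hz
  obtain rfl : ι ∘ z' = z₁' := funext hz'
  have hP : Nonempty (FibrePoint (S.map ev) g (ev ∘ z)) :=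
    P.nonempty_of_map hφ (congrArg S.map h.symm)
      (congrArg (fun f : O →+* R' => f ∘ z) h.symm) hlam hi hr
  refine hP.map fun P => ⟨z, z', P, fun l => hdvd _ ?_⟩
  rw [map_sub, map_mul, map_mul, hu, ← Function.comp_apply (f := ι), map_structMul]
  exact mul_z' l

end Branch

theorem exists_algHom_apply_ne_zero {k A : Type*} [Field k] [IsAlgClosed k] [CommRing A]
    [IsDomain A] [Algebra k A] [Algebra.FiniteType k A] {b : A} (hb : b ≠ 0) :
    ∃ π : A →ₐ[k] k, π b ≠ 0 := by
  let B := Localization.Away b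
  have : IsDomain B :=
    IsLocalization.isDomain_localization (powers_le_nonZeroDivisors_of_noZeroDivisors hb)
  have : Algebra.FiniteType k B :=
    .trans ‹_› (IsLocalization.finiteType_of_monoid_fg (Submonoid.powers b) _)
  obtain ⟨m, hm⟩ := Ideal.exists_maximal B
  let _ : Field (B ⧸ m) := Ideal.Quotient.field m
  have : Module.Finite k (B ⧸ m) := finite_of_finite_type_of_isJacobsonRing k (B ⧸ m)
  let e : k ≃ₐ[k] B ⧸ m := AlgEquiv.ofBijective (Algebra.ofId k _)
    IsAlgClosed.algebraMap_bijective_of_isIntegral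
  let π : B →ₐ[k] k := (e.symm : B ⧸ m →ₐ[k] k).comp (Ideal.Quotient.mkₐ k m)
  exact ⟨π.comp (IsScalarTower.toAlgHom k A B),
    ((IsLocalization.Away.algebraMap_isUnit b).map π).ne_zero⟩

open Filter

variable {k W : Type*} [Field k] [CommRing W] [Algebra k W]

theorem eventually_mem_adjoin (w : W) :
    ∀ᶠ s : Finset W in atTop, w ∈ (Algebra.adjoin k (s : Set W)).val.toRingHom.range := by
  filter_upwards [eventually_ge_atTop {w}] with s hs
  exact ⟨⟨w, Algebra.subset_adjoin (hs (Finset.mem_singleton_self w))⟩, rfl⟩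

theorem eventually_mem_range_mapRingHom (p : W[X]) : ∀ᶠ s : Finset W in atTop,
    p ∈ (mapRingHom (Algebra.adjoin k (s : Set W)).val.toRingHom).range := by
  filter_upwards [(eventually_all_finset p.support).2 fun n _ =>
    eventually_mem_adjoin (k := k) (p.coeff n)] with s hs
  refine (mem_map_range _).2 fun n => ?_
  by_cases hn : n ∈ p.support
  · exact hs n hn
  · rw [notMem_support_iff.1 hn]
    exact zero_mem _

theorem map_evalRingHom {W' : Type*} [CommRing W'] (φ : W →+* W') (c : W) :
    (evalRingHom (φ c)).comp (mapRingHom φ) = φ.comp (evalRingHom c) :=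
  Polynomial.ringHom_ext (fun w => by simp) (by simp)

theorem exists_subalgebra_fg_lift (S : NormalOrder G W[X]) (a : G → k)
    (B : ∀ g, Branch S (evalRingHom (algebraMap k W (a g))) (X - C (algebraMap k W (a g))) g) :
    ∃ (A : Subalgebra k W) (S' : NormalOrder G A[X]), A.FG ∧
      S'.map (mapRingHom A.val.toRingHom) = S ∧ ∀ g, Nonempty
        (Branch S' (evalRingHom (algebraMap k A (a g))) (X - C (algebraMap k A (a g))) g) := by
  have hpoly : ∀ p : G → W[X], ∀ᶠ s : Finset W in atTop, ∀ h,
      p h ∈ (mapRingHom (Algebra.adjoin k (s : Set W)).val.toRingHom).range :=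
    fun p => eventually_all.2 fun h => eventually_mem_range_mapRingHom (k := k) (p h)
  have hconst : ∀ p : G → W, ∀ᶠ s : Finset W in atTop, ∀ h,
      p h ∈ (Algebra.adjoin k (s : Set W)).val.toRingHom.range :=
    fun p => eventually_all.2 fun h => eventually_mem_adjoin (k := k) (p h)
  obtain ⟨s, ⟨⟨hγ, hd, hD⟩, hz, hz'⟩, hlam, hi, hr⟩ :=
    ((((eventually_all.2 fun h => eventually_all.2 fun h' => hpoly (S.γ h h')).and
      ((hpoly S.d).and (eventually_mem_range_mapRingHom (k := k) S.D))).and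
      ((eventually_all.2 fun g => hpoly (B g).z).and
        (eventually_all.2 fun g => hpoly (B g).z'))).and
      ((eventually_all.2 fun g => hconst (B g).fibre.lam).and
        ((eventually_all.2 fun g => eventually_all.2 fun p => hconst ((B g).fibre.i p)).and
        (eventually_all.2 fun g => eventually_all.2 fun h => hconst ((B g).fibre.r h))))).exists
  set A := Algebra.adjoin k (s : Set W)
  have hA : Function.Injective A.val.toRingHom := Subtype.val_injective
  obtain ⟨S', rfl⟩ := NormalOrder.exists_map_eq (map_injective _ hA) S hγ hd hD
  refine ⟨A, S', ⟨s, rfl⟩, rfl, fun g => Branch.nonempty_of_map hA (map_evalRingHom _ _)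
    (by simp) (fun f hf => ?_) (B g) (hz g) (hz' g) (hlam g) (hi g) (hr g)⟩
  rw [← map_dvd_map A.val.toRingHom hA ((monic_X_sub_C _).pow 2)]
  simpa using hf

theorem exists_specialization [IsAlgClosed k] [IsDomain W] (S : NormalOrder G W[X]) (a : G → k)
    (B : ∀ g, Branch S (evalRingHom (algebraMap k W (a g))) (X - C (algebraMap k W (a g))) g)
    (hD : ∀ g, S.D.eval (algebraMap k W (a g)) ≠ 0) :
    ∃ S' : NormalOrder G k[X], (∀ g, S'.D.eval (a g) ≠ 0) ∧
      ∀ g, Nonempty (Branch S' (evalRingHom (a g)) (X - C (a g)) g) := by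
  obtain ⟨A, S', hA, rfl, B'⟩ := exists_subalgebra_fg_lift S a B
  have : Algebra.FiniteType k A := A.fg_iff_finiteType.1 hA
  have hD' : ∏ g, S'.D.eval (algebraMap k A (a g)) ≠ 0 := Finset.prod_ne_zero_iff.2 fun g _ h =>
    hD g <| (RingHom.congr_fun (map_evalRingHom A.val.toRingHom (algebraMap k A (a g))) S'.D).trans
      ((congrArg A.val h).trans (map_zero _))
  obtain ⟨π, hπ⟩ := exists_algHom_apply_ne_zero (k := k) hD'
  have hev : ∀ g, (evalRingHom (a g)).comp (mapRingHom (π : A →+* k)) =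
      (π : A →+* k).comp (evalRingHom (algebraMap k A (a g))) := fun g => by
    rw [← map_evalRingHom, RingHom.coe_coe, π.commutes, Algebra.algebraMap_self_apply]
  refine ⟨S'.map (mapRingHom π), fun g h => hπ ?_, fun g => (B' g).map fun B => ?_⟩
  · rw [map_prod]
    exact Finset.prod_eq_zero (Finset.mem_univ g) ((RingHom.congr_fun (hev g) S'.D).symm.trans h)
  · exact B.map (hev g) (by simp)

end Specialization

/-! ### The affine line -/

section LocalRing

variable {k : Type*} [Field k] (c : k)

instance : (RingHom.ker (evalRingHom c)).IsPrime := RingHom.ker_isPrime _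

/-- The local ring of the affine line over `k` at the point `c`, as a ring of rational functions. -/
noncomputable def localRing : Subalgebra k[X] (RatFunc k) :=
  Localization.subalgebra.ofField (RatFunc k) (RingHom.ker (evalRingHom c)).primeCompl
    (Ideal.primeCompl_le_nonZeroDivisors _)

instance : IsLocalization.AtPrime (localRing c) (RingHom.ker (evalRingHom c)) :=
  Localization.subalgebra.isLocalization_ofField _ _ _

instance : IsFractionRing (localRing c) (RatFunc k) :=
  Localization.subalgebra.isFractionRing_ofField _ _ _

theorem ker_evalRingHom : RingHom.ker (evalRingHom c) = Ideal.span {X - C c} := by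
  ext p
  rw [RingHom.mem_ker, Ideal.mem_span_singleton, dvd_iff_isRoot]
  rfl

instance : IsLocalRing (localRing c) :=
  IsLocalization.AtPrime.isLocalRing _ (RingHom.ker (evalRingHom c))

instance : IsDiscreteValuationRing (localRing c) :=
  have hne : RingHom.ker (evalRingHom c) ≠ ⊥ := by
    rw [ker_evalRingHom, Ne, Ideal.span_singleton_eq_bot]
    exact X_sub_C_ne_zero c
  IsLocalization.AtPrime.isDiscreteValuationRing_of_dedekind_domain k[X] hne _

namespace localRing

/-- Evaluation at the point `c` on its local ring. -/
noncomputable def ev : localRing c →+* k :=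
  IsLocalization.lift (M := (RingHom.ker (evalRingHom c)).primeCompl) (g := evalRingHom c)
    fun p => isUnit_iff_ne_zero.2 p.2

@[simp]
theorem ev_algebraMap (p : k[X]) : ev c (algebraMap k[X] (localRing c) p) = p.eval c :=
  IsLocalization.lift_eq _ p

theorem ev_comp_algebraMap : (ev c).comp (algebraMap k[X] (localRing c)) = evalRingHom c :=
  IsLocalization.lift_comp _

theorem ev_surjective : Function.Surjective (ev c) := fun b =>
  ⟨algebraMap k[X] _ (C b), by rw [ev_algebraMap, eval_C]⟩

/-- The uniformizer of the local ring at `c`. -/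
noncomputable def unif : localRing c := algebraMap k[X] _ (X - C c)

theorem ker_ev : RingHom.ker (ev c) = Ideal.span {unif c} := by
  have : RingHom.ker (ev c) = IsLocalRing.maximalIdeal (localRing c) :=
    IsLocalRing.eq_maximalIdeal (RingHom.ker_isMaximal_of_surjective _ (ev_surjective c))
  rw [this, ← IsLocalization.AtPrime.map_eq_maximalIdeal (RingHom.ker (evalRingHom c)),
    ker_evalRingHom, Ideal.map_span, Set.image_singleton]
  rfl

theorem irreducible_unif : Irreducible (unif c) := by
  rw [IsDiscreteValuationRing.irreducible_iff_uniformizer, ← ker_ev]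
  exact (IsLocalRing.eq_maximalIdeal
    (RingHom.ker_isMaximal_of_surjective _ (ev_surjective c))).symm

variable {c} in
theorem isUnit_algebraMap {p : k[X]} (hp : p.eval c ≠ 0) :
    IsUnit (algebraMap k[X] (localRing c) p) :=
  IsLocalization.map_units _ (⟨p, hp⟩ : (RingHom.ker (evalRingHom c)).primeCompl)

end localRing

end LocalRing

section GaloisConclusion

variable {k : Type u} [Field k] {G : Type v} [Group G] [Fintype G] [DecidableEq G]

open Pointwise in
theorem Branch.isReduced_and_exists_smul_maximal_eq {S : NormalOrder G k[X]} {a : k} {g : G}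
    (B : Branch S (evalRingHom a) (X - C a) g) (hD : S.D.eval a ≠ 0)
    {T : NormalOrder G (RatFunc k)} (hT : S.map (algebraMap k[X] (RatFunc k)) = T)
    (hTD : IsUnit T.D) :
    IsReduced (T.Alg hTD) ∧ ∃ m : MaximalSpectrum (T.Alg hTD), g • m.asIdeal = m.asIdeal := by
  have B' : Branch (S.map (algebraMap k[X] (localRing a))) (localRing.ev a) (localRing.unif a) g :=
    B.map (φ := RingHom.id k) (localRing.ev_comp_algebraMap a) rfl
  have hD' : IsUnit (S.map (algebraMap k[X] (localRing a))).D := localRing.isUnit_algebraMap hD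
  obtain rfl : (S.map (algebraMap k[X] (localRing a))).map
      (algebraMap (localRing a) (RatFunc k)) = T := hT ▸ rfl
  exact ⟨B'.isReduced hD' (localRing.ker_ev a) (localRing.irreducible_unif a)
      (localRing.ev_surjective a),
    B'.exists_smul_maximal_eq hD' (localRing.ker_ev a) (localRing.irreducible_unif a)
      (localRing.ev_surjective a)⟩

theorem exists_galois_of_branches (S : NormalOrder G k[X]) (a : G → k)
    (hD : ∀ g, S.D.eval (a g) ≠ 0)
    (B : ∀ g, Nonempty (Branch S (evalRingHom (a g)) (X - C (a g)) g)) :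
    ∃ (N : Type (max u v)) (_ : Field N) (_ : Algebra (RatFunc k) N),
      FiniteDimensional (RatFunc k) N ∧ IsGalois (RatFunc k) N ∧
        Nonempty ((N ≃ₐ[RatFunc k] N) ≃* G) := by
  have hDK : IsUnit (S.map (algebraMap k[X] (RatFunc k))).D :=
    isUnit_iff_ne_zero.2 <| (map_ne_zero_iff _ (RatFunc.algebraMap_injective k)).2 fun h =>
      hD 1 (by rw [h, eval_zero])
  let N := (S.map (algebraMap k[X] (RatFunc k))).Alg hDK
  have hB := fun g => (B g).some.isReduced_and_exists_smul_maximal_eq (hD g) rfl hDK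
  have : IsReduced N := (hB 1).1
  let _ : Field N := (isField_of_isInvariant (E := RatFunc k) fun g => (hB g).2).toField
  have : IsGaloisGroup G (RatFunc k) N := ⟨inferInstance, inferInstance, inferInstance⟩
  exact ⟨N, inferInstance, inferInstance, inferInstance, IsGaloisGroup.isGalois G _ _,
    ⟨(IsGaloisGroup.mulEquivAlgEquiv G _ _).symm⟩⟩

end GaloisConclusion

/-! ### Twists by Kummer covers -/

section Eigenspaces

variable {G : Type*} [Group G] {k : Type*} [Field k] {A A' : Type*} [CommRing A] [Algebra k A]
  [CommRing A'] [Algebra k A'] {ζ : k} {g : G} {i j : ℕ} {φ φ' : G → A}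

/-- Functions on `G` on which right translation by `g` acts as multiplication by `ζ ^ j`. -/
def IsEigen (ζ : k) (g : G) (j : ℕ) (φ : G → A) : Prop :=
  ∀ h, φ (h * g) = ζ ^ j • φ h

theorem IsEigen.mul (hφ : IsEigen ζ g i φ) (hφ' : IsEigen ζ g j φ') :
    IsEigen ζ g (i + j) (φ * φ') := fun h => by
  rw [Pi.mul_apply, hφ, hφ', smul_mul_smul_comm, ← pow_add, Pi.mul_apply]

theorem IsEigen.pow (hφ : IsEigen ζ g i φ) (n : ℕ) : IsEigen ζ g (i * n) (φ ^ n) := fun h => by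
  rw [Pi.pow_apply, hφ, _root_.smul_pow, ← pow_mul, Pi.pow_apply]

theorem isEigen_one : IsEigen ζ g 0 (1 : G → A) := fun h => by
  rw [pow_zero, one_smul, Pi.one_apply, Pi.one_apply]

theorem IsEigen.apply_mul_pow (hφ : IsEigen ζ g j φ) (h : G) (m : ℕ) :
    φ (h * g ^ m) = ζ ^ (j * m) • φ h := by
  induction m with
  | zero => rw [pow_zero, mul_one, mul_zero, pow_zero, one_smul]
  | succ m ih => rw [pow_succ, ← mul_assoc, hφ, ih, smul_smul, ← pow_add, mul_add_one, add_comm]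

/-- The projection of the functions on `G` to the eigenspace of `ζ ^ j` for the right translation
by `g`, provided that `ζ` is a primitive root of unity of order `orderOf g`. -/
noncomputable def eigenProj (ζ : k) (g : G) (j : ℕ) : (G → A) →ₗ[A] G → A :=
  ∑ m ∈ Finset.range (orderOf g),
    ((orderOf g : k)⁻¹ * (ζ ^ (j * m))⁻¹) • LinearMap.funLeft A A (· * g ^ m)

theorem eigenProj_apply (j : ℕ) (φ : G → A) (h : G) : eigenProj ζ g j φ h =
    ∑ m ∈ Finset.range (orderOf g), ((orderOf g : k)⁻¹ * (ζ ^ (j * m))⁻¹) • φ (h * g ^ m) := by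
  simp [eigenProj, LinearMap.sum_apply, LinearMap.funLeft_apply]

theorem comp_eigenProj (L : A →ₗ[k] A') (j : ℕ) (φ : G → A) :
    L ∘ eigenProj ζ g j φ = eigenProj ζ g j (L ∘ φ) := by
  funext h
  simp [eigenProj_apply]

theorem eigenProj_translate (s : G) (j : ℕ) (φ : G → A) (h : G) :
    eigenProj ζ g j (fun x => φ (s * x)) h = eigenProj ζ g j φ (s * h) := by
  simp only [eigenProj_apply, mul_assoc]

variable (hζ : IsPrimitiveRoot ζ (orderOf g))
include hζ

theorem IsEigen.eigenProj_eq_zero (hφ : IsEigen ζ g j φ) (hi : i < orderOf g)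
    (hj : j < orderOf g) (hij : i ≠ j) : eigenProj ζ g i φ = 0 := by
  funext h
  have hne : ζ ^ j * (ζ ^ i)⁻¹ ≠ 1 := fun h =>
    hij (hζ.pow_inj hi hj (mul_inv_eq_one₀ (pow_ne_zero _ (hζ.ne_zero (by omega))) |>.1 h).symm)
  have hpow : (ζ ^ j * (ζ ^ i)⁻¹) ^ orderOf g = 1 := by
    rw [mul_pow, inv_pow, pow_right_comm, hζ.pow_eq_one, pow_right_comm ζ i, hζ.pow_eq_one]
    simp
  have hgeom : ∑ m ∈ Finset.range (orderOf g), (ζ ^ j * (ζ ^ i)⁻¹) ^ m = 0 := by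
    have := mul_geom_sum (ζ ^ j * (ζ ^ i)⁻¹) (orderOf g)
    rw [hpow, sub_self] at this
    exact (mul_eq_zero.1 this).resolve_left (sub_ne_zero.2 hne)
  calc eigenProj ζ g i φ h
      = ∑ m ∈ Finset.range (orderOf g),
          ((orderOf g : k)⁻¹ * (ζ ^ j * (ζ ^ i)⁻¹) ^ m) • φ h := by
        rw [eigenProj_apply]
        refine Finset.sum_congr rfl fun m _ => ?_
        rw [hφ.apply_mul_pow, smul_smul, mul_pow, inv_pow, ← pow_mul, ← pow_mul]
        congr 1
        ring
    _ = 0 := by rw [← Finset.sum_smul, ← Finset.mul_sum, hgeom, mul_zero, zero_smul]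

variable [Finite G]

theorem IsEigen.eigenProj_eq (hφ : IsEigen ζ g j φ) : eigenProj ζ g j φ = φ := by
  have : NeZero (orderOf g) := ⟨(orderOf_pos g).ne'⟩
  have := hζ.neZero'
  funext h
  rw [eigenProj_apply]
  have hζ0 : ζ ≠ 0 := hζ.ne_zero (orderOf_pos g).ne'
  simp only [hφ.apply_mul_pow, smul_smul, mul_assoc, inv_mul_cancel₀ (pow_ne_zero _ hζ0), mul_one,
    Finset.sum_const, Finset.card_range, ← Nat.cast_smul_eq_nsmul k]
  rw [mul_inv_cancel₀ this.out, one_smul]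

theorem isEigen_eigenProj (j : ℕ) (φ : G → A) : IsEigen ζ g j (eigenProj ζ g j φ) := fun h => by
  have hζ0 : ζ ≠ 0 := hζ.ne_zero (orderOf_pos g).ne'
  let f : ℕ → A := fun m => ((orderOf g : k)⁻¹ * (ζ ^ (j * m))⁻¹) • φ (h * g ^ m)
  have hf : f (orderOf g) = f 0 := by
    simp only [f, mul_comm j, pow_mul, hζ.pow_eq_one, pow_orderOf_eq_one, pow_zero, one_pow]
  have hstep : ∀ m, ((orderOf g : k)⁻¹ * (ζ ^ (j * m))⁻¹) • φ (h * g * g ^ m) =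
      ζ ^ j • f (m + 1) := fun m => by
    simp only [f]
    rw [smul_smul, mul_assoc h, ← pow_succ', mul_add_one, pow_add ζ, mul_inv, mul_left_comm,
      mul_left_comm (ζ ^ j), mul_inv_cancel₀ (pow_ne_zero j hζ0), mul_one]
  rw [eigenProj_apply, eigenProj_apply, Finset.sum_congr rfl fun m _ => hstep m,
    ← Finset.smul_sum]
  congr 1
  have := Finset.sum_range_succ' f (orderOf g)
  rw [Finset.sum_range_succ, hf] at this
  exact (add_right_cancel this).symm

theorem sum_eigenProj (φ : G → A) : ∑ j ∈ Finset.range (orderOf g), eigenProj ζ g j φ = φ := by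
  have : NeZero (orderOf g) := ⟨(orderOf_pos g).ne'⟩
  have := hζ.neZero'
  have hgeom : ∀ m ∈ Finset.range (orderOf g), m ≠ 0 →
      ∑ j ∈ Finset.range (orderOf g), (ζ ^ (j * m))⁻¹ = 0 := fun m hm hm0 => by
    have hne : (ζ⁻¹) ^ m ≠ 1 := hζ.inv.pow_ne_one_of_pos_of_lt hm0 (Finset.mem_range.1 hm)
    have := mul_geom_sum ((ζ⁻¹) ^ m) (orderOf g)
    rw [pow_right_comm, hζ.inv.pow_eq_one, one_pow, sub_self] at this
    rw [← (mul_eq_zero.1 this).resolve_left (sub_ne_zero.2 hne)]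
    exact Finset.sum_congr rfl fun j _ => by rw [← inv_pow, mul_comm, pow_mul]
  funext h
  simp only [Finset.sum_apply, eigenProj_apply]
  rw [Finset.sum_comm]
  simp only [← Finset.sum_smul, ← Finset.mul_sum]
  rw [Finset.sum_eq_single_of_mem 0 (Finset.mem_range.2 (orderOf_pos g)) fun m hm hm0 => by
    rw [hgeom m hm hm0, mul_zero, zero_smul]]
  simp [inv_mul_cancel₀ this.out]

end Eigenspaces

section Twist

variable {G : Type*} [Group G] {k : Type*} [Field k] {A A' : Type*} [CommRing A']
  [Algebra k A'] [CommRing A] [Algebra k A]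

/-- The operator acting on the eigenspace of `ζ ^ j` as multiplication by `y ^ j`, for
`0 ≤ j < orderOf g`. -/
noncomputable def twist (ζ : k) (g : G) (y : A) : (G → A) →ₗ[A] G → A :=
  ∑ j ∈ Finset.range (orderOf g), y ^ j • eigenProj ζ g j

/-- The product of functions on `G` obtained from the pointwise one by `twist ζ g y`, for a root `y`
of the equation `v * y ^ orderOf g = u`, and cleared of denominators. -/
noncomputable def twistMul (ζ : k) (g : G) (u v : A) : (G → A) →ₗ[A] (G → A) →ₗ[A] G → A :=
  ∑ i ∈ Finset.range (orderOf g), ∑ j ∈ Finset.range (orderOf g),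
    (if i + j < orderOf g then v else u) •
      (LinearMap.mul A (G → A)).compl₁₂ (eigenProj ζ g i) (eigenProj ζ g j)

variable {ζ : k} {g : G} {u v y : A} {i j : ℕ} {φ φ' : G → A}

theorem twist_apply (φ : G → A) :
    twist ζ g y φ = ∑ j ∈ Finset.range (orderOf g), y ^ j • eigenProj ζ g j φ := by
  simp [twist, LinearMap.sum_apply]

theorem twistMul_apply (φ φ' : G → A) : twistMul ζ g u v φ φ' =
    ∑ i ∈ Finset.range (orderOf g), ∑ j ∈ Finset.range (orderOf g),
      (if i + j < orderOf g then v else u) • (eigenProj ζ g i φ * eigenProj ζ g j φ') := by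
  simp [twistMul, LinearMap.sum_apply, -ite_smul]

theorem twist_translate (s : G) (φ : G → A) :
    twist ζ g y (fun x => φ (s * x)) = fun x => twist ζ g y φ (s * x) := by
  funext h
  simp [twist_apply, Finset.sum_apply, eigenProj_translate]

theorem comp_twistMul (L : A →ₐ[k] A') (φ φ' : G → A) :
    L ∘ twistMul ζ g u v φ φ' = twistMul ζ g (L u) (L v) (L ∘ φ) (L ∘ φ') := by
  have hL : ∀ j φ, L ∘ eigenProj ζ g j φ = eigenProj ζ g j (L ∘ φ) :=
    comp_eigenProj L.toLinearMap
  funext h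
  simp [twistMul_apply, Finset.sum_apply, ← hL, apply_ite L, -ite_smul]

variable (hζ : IsPrimitiveRoot ζ (orderOf g)) [Finite G]
include hζ

theorem IsEigen.twist_eq (hφ : IsEigen ζ g j φ) (hj : j < orderOf g) :
    twist ζ g y φ = y ^ j • φ := by
  rw [twist_apply, Finset.sum_eq_single_of_mem j (Finset.mem_range.2 hj) fun i hi hij => ?_,
    hφ.eigenProj_eq hζ]
  rw [hφ.eigenProj_eq_zero hζ (Finset.mem_range.1 hi) hj hij, smul_zero]

theorem IsEigen.twistMul_eq (hφ : IsEigen ζ g i φ) (hi : i < orderOf g) (φ' : G → A) :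
    twistMul ζ g u v φ φ' = ∑ j ∈ Finset.range (orderOf g),
      (if i + j < orderOf g then v else u) • (φ * eigenProj ζ g j φ') := by
  rw [twistMul_apply, Finset.sum_eq_single_of_mem i (Finset.mem_range.2 hi) fun i' hi' hii' => ?_,
    hφ.eigenProj_eq hζ]
  simp only [hφ.eigenProj_eq_zero hζ (Finset.mem_range.1 hi') hi hii', zero_mul, smul_zero,
    Finset.sum_const_zero]

theorem IsEigen.twistMul_eq_smul (hφ : IsEigen ζ g i φ) (hi : i < orderOf g)
    (hφ' : IsEigen ζ g j φ') (hj : j < orderOf g) :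
    twistMul ζ g u v φ φ' = (if i + j < orderOf g then v else u) • (φ * φ') := by
  rw [hφ.twistMul_eq hζ hi, Finset.sum_eq_single_of_mem j (Finset.mem_range.2 hj)
    fun j' hj' hjj' => ?_, hφ'.eigenProj_eq hζ]
  rw [hφ'.eigenProj_eq_zero hζ (Finset.mem_range.1 hj') hj hjj', mul_zero, smul_zero]

theorem twist_one : twist ζ g y (1 : G → A) = 1 := by
  rw [isEigen_one.twist_eq hζ (orderOf_pos g), pow_zero, one_smul]

theorem twist_twist {y' : A} (hy : y' * y = 1) (φ : G → A) :
    twist ζ g y (twist ζ g y' φ) = φ := by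
  rw [twist_apply (y := y'), map_sum]
  conv_rhs => rw [← sum_eigenProj hζ φ]
  refine Finset.sum_congr rfl fun j hj => ?_
  rw [map_smul, (isEigen_eigenProj hζ j φ).twist_eq hζ (Finset.mem_range.1 hj), smul_smul,
    ← mul_pow, hy, one_pow, one_smul]

theorem comp_twist_of_map_eq_one (L : A →ₐ[k] A') (hy : L y = 1) (φ : G → A) :
    L ∘ twist ζ g y φ = L ∘ φ := by
  conv_rhs => rw [← sum_eigenProj hζ φ]
  funext h
  simp [twist_apply, Finset.sum_apply, hy]

theorem twist_twistMul (hy : v * y ^ orderOf g = u) (φ φ' : G → A) :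
    twist ζ g y (twistMul ζ g u v φ φ') = v • (twist ζ g y φ * twist ζ g y φ') := by
  rw [twistMul_apply, twist_apply φ, twist_apply φ', Finset.sum_mul_sum]
  simp only [map_sum, Finset.smul_sum]
  refine Finset.sum_congr rfl fun i hi => Finset.sum_congr rfl fun j hj => ?_
  rw [Finset.mem_range] at hi hj
  have heigen := (isEigen_eigenProj hζ i φ).mul (isEigen_eigenProj hζ j φ')
  rw [map_smul, smul_mul_smul_comm, smul_smul, ← pow_add]
  split_ifs with hij
  · rw [heigen.twist_eq hζ hij, smul_smul]
  · obtain ⟨m, hm⟩ := Nat.exists_eq_add_of_le (not_lt.1 hij)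
    have heigen' : IsEigen ζ g m (eigenProj ζ g i φ * eigenProj ζ g j φ') := fun h => by
      rw [heigen, hm, pow_add, hζ.pow_eq_one, one_mul]
    rw [heigen'.twist_eq hζ (by omega), smul_smul, hm, pow_add, ← mul_assoc, hy]

theorem twist_injective (hy : IsUnit y) :
    Function.Injective (twist ζ g y : (G → A) → G → A) :=
  Function.LeftInverse.injective (g := twist ζ g ↑hy.unit⁻¹) fun φ =>
    twist_twist hζ hy.mul_val_inv φ

theorem twist_smul_mul (hy : v * y ^ orderOf g = u) {y' : A} (hyy' : y' * y = 1) (c : A)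
    (φ φ' : G → A) : twist ζ g y' ((c * v) • (φ * φ')) =
      c • twistMul ζ g u v (twist ζ g y' φ) (twist ζ g y' φ') := by
  apply twist_injective hζ (IsUnit.of_mul_eq_one_right _ hyy')
  rw [twist_twist hζ hyy', map_smul, twist_twistMul hζ hy, twist_twist hζ hyy',
    twist_twist hζ hyy', mul_smul]

theorem map_eigenProj_zero_twistMul {R : Type*} [CommRing R] (L : A →+* R) (hu : L u = 0)
    (φ φ' : G → A) (h : G) :
    L (eigenProj ζ g 0 (twistMul ζ g u v φ φ') h) =
      L v * (L (eigenProj ζ g 0 φ h) * L (eigenProj ζ g 0 φ' h)) := by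
  have hpos := orderOf_pos g
  have h0 : 0 ∈ Finset.range (orderOf g) := Finset.mem_range.2 hpos
  have hterm (i j : ℕ) (hij : ¬(i = 0 ∧ j = 0)) :
      L ((if i + j < orderOf g then v else u) *
        eigenProj ζ g 0 (eigenProj ζ g i φ * eigenProj ζ g j φ') h) = 0 := by
    have heigen := (isEigen_eigenProj hζ i φ).mul (isEigen_eigenProj hζ j φ')
    split_ifs with hlt
    · rw [heigen.eigenProj_eq_zero hζ hpos hlt (by omega), Pi.zero_apply, mul_zero, map_zero]
    · rw [map_mul, hu, zero_mul]
  rw [twistMul_apply]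
  simp only [map_sum, map_smul, Finset.sum_apply, Pi.smul_apply, smul_eq_mul]
  rw [Finset.sum_eq_single_of_mem 0 h0 fun i _ hi =>
      Finset.sum_eq_zero fun j _ => hterm i j (by tauto),
    Finset.sum_eq_single_of_mem 0 h0 fun j _ hj => hterm 0 j (by tauto),
    zero_add, if_pos hpos, map_mul]
  rw [((isEigen_eigenProj hζ 0 φ).mul (isEigen_eigenProj hζ 0 φ')).eigenProj_eq hζ, Pi.mul_apply,
    map_mul]

end Twist

section Generator

variable {G : Type*} [Group G] [Finite G] {k : Type*} [Field k] {A : Type*} [CommRing A]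
  [Algebra k A] {ζ : k} {g : G}

theorem exists_apply_mul_eq_mul (hζ : IsPrimitiveRoot ζ (orderOf g)) :
    ∃ χ : G → kˣ, ∀ h, (χ (h * g) : k) = ζ * χ h := by
  obtain ⟨ζ, rfl⟩ := hζ.isUnit (orderOf_pos g).ne'
  rw [IsPrimitiveRoot.coe_units_iff] at hζ
  let γ : Subgroup.zpowers g := ⟨g, Subgroup.mem_zpowers g⟩
  have hγ : ∀ x, x ∈ Subgroup.zpowers γ := by
    rintro ⟨_, m, rfl⟩
    exact ⟨m, rfl⟩
  let χ := monoidHomOfForallMemZpowers hγ (g' := ζ) (by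
    rw [← hζ.eq_orderOf, ← Subgroup.orderOf_coe])
  have hout : ∀ h : G, (h : G ⧸ Subgroup.zpowers g).out⁻¹ * h ∈ Subgroup.zpowers g := fun h =>
    QuotientGroup.eq.1 (QuotientGroup.out_eq' _)
  have hmk : ∀ h : G, ((h * g : G) : G ⧸ Subgroup.zpowers g) = h := fun h =>
    QuotientGroup.mk_mul_of_mem h (Subgroup.mem_zpowers g)
  refine ⟨fun h => χ ⟨_, hout h⟩, fun h => ?_⟩
  have : (⟨_, hout (h * g)⟩ : Subgroup.zpowers g) = ⟨_, hout h⟩ * γ := Subtype.ext (by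
    simp only [hmk, Subgroup.coe_mul, mul_assoc, γ])
  change ((χ ⟨_, hout (h * g)⟩ : kˣ) : k) = ζ * χ ⟨_, hout h⟩
  rw [this, map_mul, monoidHomOfForallMemZpowers_apply_gen, mul_comm, Units.val_mul]

theorem exists_isEigen_one_mul_eq_one (hζ : IsPrimitiveRoot ζ (orderOf g)) :
    ∃ χ χ' : G → A, χ' * χ = 1 ∧ IsEigen ζ g 1 χ ∧ IsEigen ζ g (orderOf g - 1) χ' := by
  obtain ⟨χ, hχ⟩ := exists_apply_mul_eq_mul hζ
  have hpos := orderOf_pos g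
  refine ⟨fun h => algebraMap k A (χ h), fun h => algebraMap k A ↑(χ h)⁻¹, ?_, fun h => ?_,
    fun h => ?_⟩
  · funext h
    rw [Pi.mul_apply, ← map_mul, Units.inv_mul, map_one, Pi.one_apply]
  · rw [pow_one, Algebra.smul_def, ← map_mul, ← hχ]
  · have hinv : ζ⁻¹ = ζ ^ (orderOf g - 1) := inv_eq_of_mul_eq_one_left <| by
      rw [← pow_succ, Nat.sub_add_cancel hpos, hζ.pow_eq_one]
    simp only [Units.val_inv_eq_inv_val, hχ]
    rw [Algebra.smul_def, ← map_mul, mul_inv, hinv]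

theorem IsEigen.iterate_twistMul_one {u v : A} {χ : G → A} (hζ : IsPrimitiveRoot ζ (orderOf g))
    (hχ : IsEigen ζ g 1 χ) (hg : 1 < orderOf g) {m : ℕ} (hm : m < orderOf g) :
    (twistMul ζ g u v χ)^[m] 1 = v ^ m • χ ^ m := by
  induction m with
  | zero => rw [Function.iterate_zero_apply, pow_zero, pow_zero, one_smul]
  | succ m ih =>
    have hpow : IsEigen ζ g m (χ ^ m) := by simpa only [one_mul] using hχ.pow m
    rw [Function.iterate_succ_apply', ih (by omega), map_smul,
      hχ.twistMul_eq_smul hζ hg hpow (by omega), if_pos (by omega), smul_smul, ← pow_succ,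
      ← pow_succ']

theorem IsEigen.twistMul_mul_sub {u v : A} {χ χ' : G → A} (hζ : IsPrimitiveRoot ζ (orderOf g))
    (hχ : IsEigen ζ g 1 χ) (hχ' : IsEigen ζ g (orderOf g - 1) χ') (hχχ' : χ' * χ = 1)
    (hg : 1 < orderOf g) (φ : G → A) :
    twistMul ζ g u v χ (χ' * (φ - eigenProj ζ g 0 φ)) = v • (φ - eigenProj ζ g 0 φ) := by
  have hsum : φ - eigenProj ζ g 0 φ =
      ∑ j ∈ Finset.range (orderOf g - 1), eigenProj ζ g (j + 1) φ := by
    have := Finset.sum_range_succ' (fun j => eigenProj ζ g j φ) (orderOf g - 1)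
    rw [Nat.sub_add_cancel hg.le, sum_eigenProj hζ] at this
    exact sub_eq_iff_eq_add.2 this
  rw [hsum, Finset.mul_sum, map_sum, Finset.smul_sum]
  refine Finset.sum_congr rfl fun j hj => ?_
  rw [Finset.mem_range] at hj
  have heigen : IsEigen ζ g j (χ' * eigenProj ζ g (j + 1) φ) := fun h => by
    rw [hχ'.mul (isEigen_eigenProj hζ (j + 1) φ), ← add_assoc, add_right_comm,
      Nat.sub_add_cancel hg.le, pow_add, hζ.pow_eq_one, one_mul]
  rw [hχ.twistMul_eq_smul hζ hg heigen (by omega), if_pos (by omega), ← mul_assoc, mul_comm χ,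
    hχχ', one_mul]

/-- Elements `z` and `z'` with product `v * u`, such that `z` generates the radical of the twisted
product modulo `u`. -/
structure RadicalGenerator (ζ : k) (g : G) (u v : A) where
  z : G → A
  z' : G → A
  mul_z' : twistMul ζ g u v z z' = (v * u) • 1
  dvd_iterate : ∃ m, ∀ l, u ∣ (twistMul ζ g u v z)^[m] 1 l
  dvd_eigenProj : ∀ h, u ∣ eigenProj ζ g 0 z h
  exists_smul_eq : ∀ φ, ∃ ρ, v • φ = v • eigenProj ζ g 0 φ + twistMul ζ g u v z ρ

theorem nonempty_radicalGenerator_of_orderOf_eq_one (hζ : IsPrimitiveRoot ζ (orderOf g))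
    (hg : orderOf g = 1) (u v : A) : Nonempty (RadicalGenerator ζ g u v) := by
  have hpos := orderOf_pos g
  have heigen : ∀ φ : G → A, IsEigen ζ g 0 φ := fun φ h => by
    rw [orderOf_eq_one_iff.1 hg, mul_one, pow_zero, one_smul]
  have hmul : ∀ φ, twistMul ζ g u v (u • 1) φ = (v * u) • φ := fun φ => by
    rw [(heigen _).twistMul_eq_smul hζ hpos (heigen _) hpos, if_pos hpos, smul_mul_assoc, one_mul,
      smul_smul]
  refine ⟨u • 1, 1, hmul 1, ⟨1, fun l => ?_⟩, fun h => ?_, fun φ => ⟨0, ?_⟩⟩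
  · rw [Function.iterate_one, hmul]
    exact (dvd_mul_left u v).mul_right _
  · rw [(heigen _).eigenProj_eq hζ]
    exact dvd_mul_right u _
  · rw [(heigen _).eigenProj_eq hζ, map_zero, add_zero]

/- If `g ≠ 1` then `z` may be taken to be an invertible eigenfunction for `ζ`. -/
theorem nonempty_radicalGenerator (hζ : IsPrimitiveRoot ζ (orderOf g)) (u v : A) :
    Nonempty (RadicalGenerator ζ g u v) := by
  have hpos := orderOf_pos g
  rcases (Nat.one_le_iff_ne_zero.2 hpos.ne').eq_or_lt with hone | hg
  · exact nonempty_radicalGenerator_of_orderOf_eq_one hζ hone.symm u v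
  obtain ⟨χ, χ', hχχ', hχ, hχ'⟩ := exists_isEigen_one_mul_eq_one (A := A) hζ
  refine ⟨χ, v • χ', ?_, ⟨orderOf g - 1 + 1, fun l => ?_⟩, fun h => ?_, fun φ =>
    ⟨χ' * (φ - eigenProj ζ g 0 φ), ?_⟩⟩
  · rw [map_smul, hχ.twistMul_eq_smul hζ hg hχ' (by omega), if_neg (by omega), mul_comm χ, hχχ',
      smul_smul]
  · have hpow : IsEigen ζ g (orderOf g - 1) (χ ^ (orderOf g - 1)) := by
      simpa only [one_mul] using hχ.pow (orderOf g - 1)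
    rw [Function.iterate_succ_apply', hχ.iterate_twistMul_one hζ hg (by omega), map_smul,
      hχ.twistMul_eq_smul hζ hg hpow (by omega), if_neg (by omega)]
    exact (dvd_mul_right u _).mul_left _
  · rw [hχ.eigenProj_eq_zero hζ hpos hg (by omega), Pi.zero_apply]
    exact dvd_zero u
  · rw [hχ.twistMul_mul_sub hζ hχ' hχχ' hg φ, ← smul_add, add_sub_cancel]

end Generator

section LocalBranch

open Matrix

variable {G : Type*} [Group G] [Fintype G] [DecidableEq G] {k : Type*} [Field k] {A R : Type*}
  [CommRing A] [Algebra k A] [CommRing R] {ζ : k} {g : G} {u v : A}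

/-- A `G`-equivariant coordinate change identifying a normal order, near a point where `u` vanishes,
with the twisted product, up to the factor `c`. -/
structure Kummer (S : NormalOrder G A) (ζ : k) (g : G) (u v c : A) where
  E : (G → A) ≃ₗ[A] G → A
  translate : ∀ (s : G) p, E (fun x => p (s * x)) = fun x => E p (s * x)
  γ_eq : ∀ h h', E (S.γ h h') =
    c • twistMul ζ g u v (E (Pi.single h 1)) (E (Pi.single h' 1))
  d_eq : E S.d = 1
  D_eq : S.D = c * v

namespace Kummer

variable {S : NormalOrder G A} {c : A} (M : Kummer S ζ g u v c)

theorem structMul_eq (p q : G → A) :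
    M.E (structMul S.γ p q) = c • twistMul ζ g u v (M.E p) (M.E q) := by
  have : (structMul S.γ).compr₂ M.E.toLinearMap =
      c • (twistMul ζ g u v).compl₁₂ M.E.toLinearMap M.E.toLinearMap :=
    LinearMap.ext_basis (Pi.basisFun A G) (Pi.basisFun A G) fun h h' => by
      simp [structMul_single_single, M.γ_eq]
  exact LinearMap.congr_fun₂ this p q

theorem structMul_symm (φ φ' : G → A) :
    structMul S.γ (M.E.symm φ) (M.E.symm φ') = c • M.E.symm (twistMul ζ g u v φ φ') := by
  rw [← map_smul, LinearEquiv.eq_symm_apply, structMul_eq, LinearEquiv.apply_symm_apply,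
    LinearEquiv.apply_symm_apply]

theorem iterate_structMul_symm (φ : G → A) (m : ℕ) :
    (structMul S.γ (M.E.symm φ))^[m] S.d =
      c ^ m • M.E.symm ((twistMul ζ g u v φ)^[m] 1) := by
  induction m with
  | zero =>
    rw [pow_zero, one_smul, Function.iterate_zero_apply, Function.iterate_zero_apply,
      LinearEquiv.eq_symm_apply, M.d_eq]
  | succ m ih =>
    rw [Function.iterate_succ_apply', ih, map_smul, structMul_symm, smul_smul, ← pow_succ,
      Function.iterate_succ_apply']

/-- The values at the basis vectors of the character which, modulo `u`, sends `p` to the component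
of `E p` invariant under `g`, evaluated at `1`. -/
noncomputable def lam (h : G) : A := S.D * eigenProj ζ g 0 (M.E (Pi.single h 1)) 1

theorem lam_inv_mul (p h : G) :
    M.lam (p⁻¹ * h) = S.D * eigenProj ζ g 0 (M.E (Pi.single h 1)) p := by
  have : (Pi.single (p⁻¹ * h) 1 : G → A) = fun x => (Pi.single h 1 : G → A) (p * x) := by
    funext x
    simp [Pi.single_apply, eq_inv_mul_iff_mul_eq]
  rw [lam, this, M.translate, eigenProj_translate, mul_one]

theorem dotProduct_lam (q : G → A) (p : G) : (q ⬝ᵥ fun h => M.lam (p⁻¹ * h)) =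
    S.D * eigenProj ζ g 0 (M.E q) p := by
  conv_rhs => rw [pi_eq_sum_univ' q]
  simp [lam_inv_mul, dotProduct, Finset.mul_sum, mul_left_comm]

theorem dotProduct_lam_one (q : G → A) : q ⬝ᵥ M.lam = S.D * eigenProj ζ g 0 (M.E q) 1 := by
  simpa only [inv_one, one_mul] using M.dotProduct_lam q 1

theorem lam_mul_left (hζ : IsPrimitiveRoot ζ (orderOf g)) (h : G) : M.lam (g * h) = M.lam h := by
  have := M.lam_inv_mul g⁻¹ h
  rw [inv_inv] at this
  have heigen := isEigen_eigenProj hζ 0 (M.E (Pi.single h 1)) g⁻¹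
  rw [inv_mul_cancel, pow_zero, one_smul] at heigen
  rw [this, lam, heigen]

theorem smul_single_eq (Γ : RadicalGenerator ζ g u v) (h : G) :
    ∃ r, S.D • Pi.single h 1 = ∑ p, M.lam (p⁻¹ * h) • M.E.symm (Pi.single p 1) +
      structMul S.γ (M.E.symm Γ.z) r := by
  obtain ⟨ρ, hρ⟩ := Γ.exists_smul_eq (M.E (Pi.single h 1))
  refine ⟨M.E.symm ρ, M.E.injective ?_⟩
  rw [map_smul, M.D_eq, mul_smul, hρ, map_add, structMul_eq, LinearEquiv.apply_symm_apply,
    LinearEquiv.apply_symm_apply, smul_add]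
  congr 1
  rw [pi_eq_sum_univ' (eigenProj ζ g 0 (M.E (Pi.single h 1)))]
  simp only [map_sum, map_smul, LinearEquiv.apply_symm_apply, lam_inv_mul, M.D_eq, smul_smul,
    Finset.smul_sum, mul_assoc]

theorem nonempty_fibrePoint (hζ : IsPrimitiveRoot ζ (orderOf g)) (Γ : RadicalGenerator ζ g u v)
    {ev : A →+* R} (hu : ev u = 0) :
    Nonempty (FibrePoint (S.map ev) g (ev ∘ M.E.symm Γ.z)) := by
  choose r hr using M.smul_single_eq Γ
  have hdvd : ∀ {f : A}, u ∣ f → ev f = 0 := fun hf => zero_dvd_iff.1 (hu ▸ map_dvd ev hf)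
  have hdot : ∀ (q : G → A) (lam : G → A), (ev ∘ q ⬝ᵥ ev ∘ lam) = ev (q ⬝ᵥ lam) := fun q lam =>
    (ev.map_dotProduct q lam).symm
  refine ⟨⟨ev ∘ M.lam, fun p => ev ∘ M.E.symm (Pi.single p 1), fun h => ev ∘ r h,
    fun h => congrArg ev (M.lam_mul_left hζ h), fun h h' => ?_, ?_, fun p => ?_, ?_, fun h => ?_⟩⟩
  · refine (hdot _ _).trans ?_
    rw [dotProduct_lam_one, M.γ_eq, map_smul, Pi.smul_apply, smul_eq_mul, map_mul, map_mul,
      map_eigenProj_zero_twistMul hζ ev hu, Function.comp_apply, Function.comp_apply, lam, lam,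
      M.D_eq]
    simp only [map_mul]
    ring
  · refine (hdot _ _).trans ?_
    rw [dotProduct_lam_one, M.d_eq, isEigen_one.eigenProj_eq hζ, Pi.one_apply, mul_one]
    rfl
  · refine (hdot _ _).trans ?_
    rw [dotProduct_lam, LinearEquiv.apply_symm_apply, map_mul, hdvd (Γ.dvd_eigenProj p), mul_zero]
  · obtain ⟨m, hm⟩ := Γ.dvd_iterate
    choose f hf using hm
    refine ⟨m, (map_iterate_structMul ev S.γ _ S.d m).symm.trans (funext fun l => hdvd ?_)⟩
    rw [iterate_structMul_symm, show (twistMul ζ g u v Γ.z)^[m] 1 = u • f from funext hf, map_smul,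
      smul_comm]
    exact dvd_mul_right u _
  · refine sub_eq_zero.1 ((map_decomp ev h).symm.trans ?_)
    rw [sub_eq_zero.2 (hr h)]
    exact funext fun _ => map_zero ev

include M in
theorem nonempty_branch (hζ : IsPrimitiveRoot ζ (orderOf g)) {ev : A →+* R} (hu : ev u = 0) :
    Nonempty (Branch S ev u g) := by
  obtain ⟨Γ⟩ := nonempty_radicalGenerator hζ u v
  refine (M.nonempty_fibrePoint hζ Γ hu).map fun P => ⟨_, M.E.symm Γ.z', P, fun l => ?_⟩
  have hd : M.E.symm 1 = S.d := M.E.symm_apply_eq.2 M.d_eq.symm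
  rw [structMul_symm, Γ.mul_z', map_smul, hd, smul_smul, ← mul_assoc, ← M.D_eq]
  simp [mul_assoc, mul_left_comm u]

end Kummer

end LocalBranch

/-! ### Power series in the deformation parameter -/

section SeriesOfPolynomials

variable {k B B' : Type*} [CommRing k] [CommRing B'] [CommRing B]

/-- The expansion of a polynomial in `t` with coefficients in `k⟦X⟧` as a power series in `X`
whose coefficients are values of a homomorphism `φ` on the polynomials in `t`. -/
noncomputable def toSeries (φ : k[X] →+* B) : k⟦X⟧[X] →+* B⟦X⟧ :=
  eval₂RingHom (PowerSeries.map (φ.comp C)) (PowerSeries.C (φ X))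

variable (φ : k[X] →+* B)

theorem toSeries_C (f : k⟦X⟧) : toSeries φ (C f) = PowerSeries.map (φ.comp C) f :=
  eval₂_C _ _

theorem toSeries_X : toSeries φ X = PowerSeries.C (φ X) :=
  eval₂_X _ _

theorem toSeries_X_sub_C_C (c : k) : toSeries φ (X - C (PowerSeries.C c)) =
    PowerSeries.C (φ (X - C c)) := by
  rw [map_sub, toSeries_X, toSeries_C, PowerSeries.map_C, map_sub, map_sub, RingHom.comp_apply]

theorem map_comp_toSeries (ψ : B →+* B') :
    (PowerSeries.map ψ).comp (toSeries φ) = toSeries (ψ.comp φ) := by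
  refine Polynomial.ringHom_ext' (RingHom.ext fun f => ?_) ?_
  · ext n
    simp [toSeries_C]
  · simp [toSeries_X]

theorem toSeries_evalRingHom (c : k) :
    toSeries (evalRingHom c) = evalRingHom (PowerSeries.C c) := by
  refine Polynomial.ringHom_ext' (RingHom.ext fun f => ?_) ?_
  · ext n
    simp [toSeries_C]
  · simp [toSeries_X]

theorem coeff_toSeries (p : k⟦X⟧[X]) (n : ℕ) : PowerSeries.coeff n (toSeries φ p) =
    φ (p.sum fun i f => monomial i (PowerSeries.coeff n f)) := by
  rw [Polynomial.sum, map_sum]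
  conv_lhs => rw [p.as_sum_support_C_mul_X_pow]
  simp only [map_sum, map_mul, map_pow, toSeries_C, toSeries_X]
  refine Finset.sum_congr rfl fun i _ => ?_
  rw [← map_pow, PowerSeries.coeff_mul_C, PowerSeries.coeff_map, ← C_mul_X_pow_eq_monomial,
    map_mul, map_pow, RingHom.comp_apply]

variable {φ}

theorem toSeries_injective (hφ : Function.Injective φ) : Function.Injective (toSeries φ) := by
  refine (injective_iff_map_eq_zero _).2 fun p hp => ?_
  ext i n
  have h := congrArg (PowerSeries.coeff n) hp
  rw [coeff_toSeries, map_zero, map_eq_zero_iff φ hφ] at h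
  have hi : p.coeff i ≠ 0 → PowerSeries.coeff n (p.coeff i) = 0 := by
    simpa [Polynomial.sum, coeff_monomial] using congrArg (coeff · i) h
  rw [coeff_zero, map_zero]
  exact (eq_or_ne (p.coeff i) 0).elim (fun h0 => by rw [h0, map_zero]) hi

theorem mem_range_toSeries {f : B⟦X⟧} {m : ℕ}
    (hf : ∀ n, ∃ p : k[X], p.natDegree ≤ m ∧ φ p = PowerSeries.coeff n f) :
    f ∈ (toSeries φ).range := by
  choose p hdeg hp using hf
  refine ⟨∑ i ∈ Finset.range (m + 1), C (PowerSeries.mk fun n => (p n).coeff i) * X ^ i, ?_⟩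
  ext n
  rw [← hp, (p n).as_sum_range_C_mul_X_pow' (Nat.lt_succ_of_le (hdeg n))]
  simp only [map_sum, map_mul, map_pow, toSeries_C, toSeries_X]
  refine Finset.sum_congr rfl fun i _ => ?_
  rw [← map_pow, PowerSeries.coeff_mul_C, PowerSeries.coeff_map, PowerSeries.coeff_mk,
    RingHom.comp_apply]

theorem C_dvd_of_map_eq_zero {ψ : B →+* B'} {u : B} (hu : RingHom.ker ψ = Ideal.span {u})
    {f : B⟦X⟧} (hf : PowerSeries.map ψ f = 0) : PowerSeries.C u ∣ f := by
  have : ∀ n, u ∣ PowerSeries.coeff n f := fun n => by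
    rw [← Ideal.mem_span_singleton, ← hu, RingHom.mem_ker, ← PowerSeries.coeff_map, hf, map_zero]
  choose g hg using this
  exact ⟨PowerSeries.mk g, PowerSeries.ext fun n => by
    rw [hg, PowerSeries.coeff_C_mul, PowerSeries.coeff_mk]⟩

end SeriesOfPolynomials

section BranchDescent

variable {W O : Type*} [CommRing W] [CommRing O] {J : W[X] →+* O} {ev : O →+* W} {w : W}
  (hJ : ev.comp J = evalRingHom w)
include hJ

theorem exists_pow_dvd_sub (hev : ∀ f, ev f = 0 → J (X - C w) ∣ f) (m : ℕ) (f : O) :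
    ∃ p, J (X - C w) ^ m ∣ f - J p := by
  have hJ' (p : W[X]) : ev (J p) = p.eval w := congrArg (· p) hJ
  induction m with
  | zero => exact ⟨0, by rw [pow_zero]; exact one_dvd _⟩
  | succ m ih =>
    obtain ⟨p, r, hr⟩ := ih
    obtain ⟨s, hs⟩ := hev (r - J (C (ev r))) (by rw [map_sub, hJ', eval_C, sub_self])
    refine ⟨p + (X - C w) ^ m * C (ev r), s, ?_⟩
    rw [map_add, map_mul, map_pow, ← sub_sub, hr, ← mul_sub, hs, pow_succ, mul_assoc]

theorem pow_dvd_of_map_pow_dvd (hreg : IsLeftRegular (J (X - C w))) {m : ℕ} {p : W[X]}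
    (h : J (X - C w) ^ m ∣ J p) : (X - C w) ^ m ∣ p := by
  have hJ' (p : W[X]) : ev (J p) = p.eval w := congrArg (· p) hJ
  induction m generalizing p with
  | zero => rw [pow_zero]; exact one_dvd _
  | succ m ih =>
    obtain ⟨p', rfl⟩ : X - C w ∣ p := by
      rw [dvd_iff_isRoot, IsRoot, ← hJ']
      obtain ⟨q, hq⟩ := h
      rw [hq, pow_succ', map_mul, map_mul, hJ', eval_sub, eval_X, eval_C, sub_self, zero_mul,
        zero_mul]
    rw [pow_succ']
    obtain ⟨q, hq⟩ := h
    refine mul_dvd_mul_left _ (ih ⟨q, hreg ?_⟩)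
    simpa only [map_mul, pow_succ', mul_assoc] using hq

variable {G : Type*} [Group G] [Fintype G] [DecidableEq G] {S : NormalOrder G W[X]} {g : G}

/- A branch involves its elements `z`, `z'` only modulo the square of the uniformizer. -/
theorem Branch.nonempty_of_map_series (hev : ∀ f, ev f = 0 → J (X - C w) ∣ f)
    (hreg : IsLeftRegular (J (X - C w))) (B : Branch (S.map J) ev (J (X - C w)) g) :
    Nonempty (Branch S (evalRingHom w) (X - C w) g) := by
  have hJ' (p : W[X]) : ev (J p) = p.eval w := congrArg (· p) hJ
  choose z hz using fun h => exists_pow_dvd_sub hJ hev 2 (B.z h)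
  choose z' hz' using fun h => exists_pow_dvd_sub hJ hev 2 (B.z' h)
  have hzev : ev ∘ B.z = evalRingHom w ∘ z := funext fun h => by
    obtain ⟨r, hr⟩ := hz h
    rw [Function.comp_apply, Function.comp_apply, coe_evalRingHom, ← hJ', ← sub_eq_zero, ← map_sub,
      hr, map_mul, map_pow, hJ', eval_sub, eval_X, eval_C, sub_self, zero_pow two_ne_zero, zero_mul]
  obtain ⟨P⟩ : Nonempty (FibrePoint (S.map (evalRingHom w)) g (evalRingHom w ∘ z)) := by
    rw [← hzev, ← hJ]
    exact ⟨B.fibre⟩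
  refine ⟨⟨z, z', P, fun l => pow_dvd_of_map_pow_dvd hJ hreg ?_⟩⟩
  have hmul := congrFun (map_structMul J S.γ z z') l
  have hsub : J (X - C w) ^ 2 ∣
      structMul (S.map J).γ B.z B.z' l - structMul (S.map J).γ (J ∘ z) (J ∘ z') l := by
    simp only [structMul_apply, ← Finset.sum_sub_distrib]
    refine Finset.dvd_sum fun h _ => Finset.dvd_sum fun h' _ => ?_
    obtain ⟨r, hr⟩ := hz h
    obtain ⟨r', hr'⟩ := hz' h'
    refine ⟨r * (B.z' h' * (S.map J).γ h h' l) + J (z h) * (r' * (S.map J).γ h h' l), ?_⟩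
    simp only [Function.comp_apply]
    linear_combination (B.z' h' * (S.map J).γ h h' l) * hr + J (z h) * (S.map J).γ h h' l * hr'
  convert (B.mul_z' l).sub hsub using 1
  rw [map_sub, map_mul, map_mul, ← Function.comp_apply (f := J), hmul]
  simp only [NormalOrder.map, Function.comp_apply]
  ring

end BranchDescent

section Convolution

variable {G : Type*} [Group G] [Fintype G] {A A' : Type*} [CommRing A'] [CommRing A]

/-- Convolution with `θ` from the right, sending the basis vector at `h` to the left translate of
`θ` by `h`. -/
noncomputable def convolve (θ : G → A) : (G → A) →ₗ[A] G → A :=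
  Fintype.linearCombination A fun h x => θ (h⁻¹ * x)

theorem convolve_apply (θ p : G → A) (x : G) : convolve θ p x = ∑ h, p h * θ (h⁻¹ * x) := by
  simp [convolve, Fintype.linearCombination_apply]

theorem convolve_single [DecidableEq G] (θ : G → A) (h : G) :
    convolve θ (Pi.single h 1) = fun x => θ (h⁻¹ * x) := by
  rw [convolve, Fintype.linearCombination_apply_single, one_smul]

theorem convolve_translate (θ : G → A) (s : G) (p : G → A) :
    convolve θ (fun x => p (s * x)) = fun x => convolve θ p (s * x) := by
  funext x
  rw [convolve_apply, convolve_apply, ← Equiv.sum_comp (Equiv.mulLeft s) fun h => p h * _]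
  simp [mul_assoc]

theorem comp_convolve (φ : A →+* A') (θ p : G → A) :
    φ ∘ convolve θ p = convolve (φ ∘ θ) (φ ∘ p) := by
  funext x
  simp [convolve_apply]

theorem map_convolve {L : (G → A) →ₗ[A] G → A}
    (hL : ∀ (s : G) p, L (fun x => p (s * x)) = fun x => L p (s * x)) (θ p : G → A) :
    L (convolve θ p) = convolve (L θ) p := by
  classical
  have : L ∘ₗ convolve θ = convolve (L θ) := (Pi.basisFun A G).ext fun h => by
    simp [convolve_single, hL]
  exact LinearMap.congr_fun this p

theorem bijective_convolve [DecidableEq G] {θ : G → A⟦X⟧}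
    (hθ : PowerSeries.constantCoeff ∘ θ = Pi.single 1 1) : Function.Bijective (convolve θ) := by
  rw [← Module.End.isUnit_iff, LinearMap.isUnit_iff_isUnit_det, ← LinearMap.det_toMatrix',
    PowerSeries.isUnit_iff_constantCoeff, RingHom.map_det]
  suffices PowerSeries.constantCoeff.mapMatrix (LinearMap.toMatrix' (convolve θ)) = 1 by
    rw [this, Matrix.det_one]
    exact isUnit_one
  ext x h
  rw [RingHom.mapMatrix_apply, Matrix.map_apply, LinearMap.toMatrix'_apply, convolve_single,
    ← Function.comp_apply (f := PowerSeries.constantCoeff), hθ, Pi.single_apply, Matrix.one_apply]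
  simp only [inv_mul_eq_one, eq_comm]

end Convolution

section Transport

variable {G : Type*} [Group G] [Fintype G] [DecidableEq G] {A : Type*} [CommRing A]

omit [Group G] in
theorem structMul_symm_smul_mul (T : (G → A) ≃ₗ[A] G → A) (D : A) (p q : G → A) :
    structMul (fun h h' => T.symm (D • (T (Pi.single h 1) * T (Pi.single h' 1)))) p q =
      T.symm (D • (T p * T q)) := by
  have : structMul (fun h h' => T.symm (D • (T (Pi.single h 1) * T (Pi.single h' 1)))) =
      (D • (LinearMap.mul A (G → A)).compl₁₂ T.toLinearMap T.toLinearMap).compr₂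
        T.symm.toLinearMap :=
    LinearMap.ext_basis (Pi.basisFun A G) (Pi.basisFun A G) fun h h' => by
      simp [structMul_single_single]
  exact LinearMap.congr_fun₂ this p q

/-- The pointwise product of functions on `G`, multiplied by `D` and transported along an
equivariant linear automorphism `T`. -/
noncomputable def NormalOrder.ofEquiv (T : (G → A) ≃ₗ[A] G → A)
    (hT : ∀ (s : G) p, T (fun x => p (s * x)) = fun x => T p (s * x)) (D : A) :
    NormalOrder G A where
  γ h h' := T.symm (D • (T (Pi.single h 1) * T (Pi.single h' 1)))
  d := T.symm 1
  D := D
  comm h h' := by rw [mul_comm]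
  assoc h h' h'' := by
    simp only [structMul_symm_smul_mul, T.apply_symm_apply, smul_mul_assoc, mul_smul_comm,
      mul_assoc]
  d_mul h := by
    rw [structMul_symm_smul_mul, T.apply_symm_apply, one_mul, map_smul, T.symm_apply_apply]
  equivariant s h h' l := by
    have hsingle (h : G) : T (Pi.single h 1) = fun x => T (Pi.single (s * h) 1) (s * x) := by
      rw [← hT]
      congr 1
      funext x
      simp [Pi.single_apply]
    refine congrFun (T.injective ?_ : (fun x => T.symm _ (s * x)) = T.symm _) l
    rw [hT, T.apply_symm_apply, T.apply_symm_apply, hsingle h, hsingle h']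
    rfl

variable {A' : Type*} [CommRing A']

omit [Group G] [Fintype G] [DecidableEq G] in
theorem mem_range_of_comp_eq {ι : A' →+* A} {T : (G → A) → G → A}
    (hT : Function.Injective T) {E : (G → A') → G → A'} (hE : Function.Surjective E)
    (hιE : ∀ p, ι ∘ E p = T (ι ∘ p)) {p : G → A} {q : G → A'} (hp : T p = ι ∘ q) (h : G) :
    p h ∈ ι.range := by
  obtain ⟨p', rfl⟩ := hE q
  rw [hιE] at hp
  exact ⟨p' h, congrFun (hT hp).symm h⟩

variable {k : Type*} [Field k] [Algebra k A] [Algebra k A'] {ζ : k} {g : G}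

omit [Fintype G] [DecidableEq G] in
theorem twist_smul_mul_eq_comp [Finite G] (hζ : IsPrimitiveRoot ζ (orderOf g)) {ι : A' →ₐ[k] A}
    {u v : A'} {y y' : A} (hy : ι v * y ^ orderOf g = ι u) (hyy' : y' * y = 1) (c : A')
    {φ φ' : G → A} {q q' : G → A'} (hφ : twist ζ g y' φ = ι ∘ q) (hφ' : twist ζ g y' φ' = ι ∘ q') :
    twist ζ g y' (ι (c * v) • (φ * φ')) = ι ∘ (c • twistMul ζ g u v q q') := by
  rw [map_mul, twist_smul_mul hζ hy hyy', hφ, hφ', ← comp_twistMul]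
  exact funext fun _ => (map_mul ι _ _).symm

/- The root `y` of `u / v` lives in the larger ring `A` only, but the twisted product which it
trivializes is defined over `A'`. -/
theorem nonempty_kummer_of_map_eq (hζ : IsPrimitiveRoot ζ (orderOf g)) {ι : A' →ₐ[k] A}
    (hι : Function.Injective ι) {u v c : A'} {y y' : A} (hy : ι v * y ^ orderOf g = ι u)
    (hyy' : y' * y = 1) {T : (G → A) ≃ₗ[A] G → A}
    {hT : ∀ (s : G) p, T (fun x => p (s * x)) = fun x => T p (s * x)}
    {E : (G → A') ≃ₗ[A'] G → A'} (hE : ∀ p, ι ∘ E p = twist ζ g y' (T (ι ∘ p)))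
    (hEs : ∀ (s : G) p, E (fun x => p (s * x)) = fun x => E p (s * x))
    {S : NormalOrder G A'} (hS : S.map ι = NormalOrder.ofEquiv T hT (ι (c * v))) :
    Nonempty (Kummer S ζ g u v c) := by
  have hγ (h h' : G) : ι ∘ S.γ h h' = T.symm _ :=
    congrFun (congrFun (congrArg NormalOrder.γ hS) h) h'
  have hd : ι ∘ S.d = T.symm 1 := congrArg NormalOrder.d hS
  have hD : ι S.D = ι (c * v) := congrArg NormalOrder.D hS
  refine ⟨⟨E, hEs, fun h h' => hι.comp_left ?_, hι.comp_left ?_, hι hD⟩⟩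
  · have hsingle (h : G) : twist ζ g y' (T (Pi.single h 1)) = ι ∘ E (Pi.single h 1) := by
      rw [hE, ← comp_single_one (ι : A' →+* A), RingHom.coe_coe]
    exact (hE _).trans ((congrArg _ (congrArg T (hγ h h') |>.trans (T.apply_symm_apply _))).trans
      (twist_smul_mul_eq_comp hζ hy hyy' c (hsingle h) (hsingle h')))
  · simp only
    rw [hE, hd, T.apply_symm_apply, twist_one hζ]
    exact funext fun _ => (map_one ι).symm

end Transport

/-! ### Patching -/

section Cartan

variable {G K : Type*} [CommRing K]

theorem exists_series_limit {s : ℕ → G → K⟦X⟧}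
    (hs : ∀ n h, PowerSeries.X ^ (n + 1) ∣ s (n + 1) h - s n h) :
    ∃ θ : G → K⟦X⟧, ∀ n h, PowerSeries.X ^ (n + 1) ∣ θ h - s n h := by
  refine ⟨fun h => PowerSeries.mk fun n => PowerSeries.coeff n (s n h), fun n h => ?_⟩
  refine PowerSeries.X_pow_dvd_iff.2 fun m hm => ?_
  rw [map_sub, PowerSeries.coeff_mk, sub_eq_zero]
  induction n, Nat.lt_succ_iff.1 hm using Nat.le_induction with
  | base => rfl
  | succ n hmn ih =>
    rw [ih (by omega), eq_comm, ← sub_eq_zero, ← map_sub]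
    exact PowerSeries.X_pow_dvd_iff.1 (hs n h) m (by omega)

theorem dvd_map_sub {L : (G → K) →ₗ[K] G → K} {x : K} {φ φ' : G → K}
    (h : ∀ s, x ∣ φ s - φ' s) (s : G) : x ∣ L φ s - L φ' s := by
  choose r hr using h
  have : φ = φ' + x • r := funext fun s => eq_add_of_sub_eq' (hr s)
  exact ⟨L r s, by rw [this, map_add, map_smul]; simp⟩

variable {ι : Type*} [Finite ι] {A : ι → AddSubgroup K} {B : AddSubgroup K}
  (hAB : ∀ i f, ∃ p, f - p ∈ A i ∧ (∀ j ≠ i, p ∈ A j) ∧ p ∈ B)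
  {L : ι → (G → K⟦X⟧) →ₗ[K⟦X⟧] G → K⟦X⟧}
  (hL : ∀ i φ, PowerSeries.constantCoeff ∘ L i φ = PowerSeries.constantCoeff ∘ φ)
include hAB

theorem exists_sub_mem (f : ι → K) : ∃ p ∈ B, ∀ i, f i - p ∈ A i := by
  classical
  have := Fintype.ofFinite ι
  choose p hpi hpj hpB using fun i => hAB i (f i)
  refine ⟨∑ i, p i, B.sum_mem fun i _ => hpB i, fun i => ?_⟩
  rw [← Finset.add_sum_erase _ _ (Finset.mem_univ i), ← sub_sub]
  exact (A i).sub_mem (hpi i)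
    ((A i).sum_mem fun j hj => hpj j i (Finset.ne_of_mem_erase hj).symm)

include hL

theorem exists_series_step {n : ℕ} {s : G → K⟦X⟧}
    (hA : ∀ i h, ∀ m ≤ n, PowerSeries.coeff m (L i s h) ∈ A i)
    (hB : ∀ h m, PowerSeries.coeff m (s h) ∈ B) :
    ∃ s' : G → K⟦X⟧, (∀ h, PowerSeries.X ^ (n + 1) ∣ s' h - s h) ∧
      (∀ i h, ∀ m ≤ n + 1, PowerSeries.coeff m (L i s' h) ∈ A i) ∧
      ∀ h m, PowerSeries.coeff m (s' h) ∈ B := by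
  choose p hpB hpA using fun h =>
    exists_sub_mem hAB fun i => PowerSeries.coeff (n + 1) (L i s h)
  let r : G → K⟦X⟧ := fun h => PowerSeries.C (p h)
  refine ⟨s - (PowerSeries.X ^ (n + 1) : K⟦X⟧) • r, fun h => ⟨-r h, ?_⟩, fun i h m hm => ?_,
    fun h m => ?_⟩
  · simp
  · have hLr : PowerSeries.constantCoeff (L i r h) = p h :=
      (congrFun (hL i r) h).trans (PowerSeries.constantCoeff_C _)
    rw [map_sub, map_smul, Pi.sub_apply, Pi.smul_apply, smul_eq_mul, map_sub,
      PowerSeries.coeff_X_pow_mul']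
    split_ifs with hnm
    · obtain rfl : m = n + 1 := le_antisymm hm hnm
      rw [Nat.sub_self, PowerSeries.coeff_zero_eq_constantCoeff_apply, hLr]
      exact hpA h i
    · rw [sub_zero]
      exact hA i h m (by omega)
  · rw [Pi.sub_apply, Pi.smul_apply, smul_eq_mul, map_sub, PowerSeries.coeff_X_pow_mul']
    refine B.sub_mem (hB h m) ?_
    split_ifs
    · rw [PowerSeries.coeff_C]
      split_ifs
      exacts [hpB h, B.zero_mem]
    · exact B.zero_mem

theorem exists_series_mem {θ₀ : G → K} (hA : ∀ i h, θ₀ h ∈ A i) (hB : ∀ h, θ₀ h ∈ B) :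
    ∃ θ : G → K⟦X⟧, PowerSeries.constantCoeff ∘ θ = θ₀ ∧
      (∀ i h n, PowerSeries.coeff n (L i θ h) ∈ A i) ∧ ∀ h n, PowerSeries.coeff n (θ h) ∈ B := by
  let P (n : ℕ) (s : G → K⟦X⟧) : Prop :=
    (∀ i h, ∀ m ≤ n, PowerSeries.coeff m (L i s h) ∈ A i) ∧ ∀ h m, PowerSeries.coeff m (s h) ∈ B
  have h₀ : PowerSeries.constantCoeff ∘ PowerSeries.C ∘ θ₀ = θ₀ :=
    funext fun h => PowerSeries.constantCoeff_C _
  have hP₀ : P 0 (PowerSeries.C ∘ θ₀) := by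
    refine ⟨fun i h m hm => ?_, fun h m => ?_⟩
    · rw [Nat.le_zero.1 hm, PowerSeries.coeff_zero_eq_constantCoeff_apply,
        ← Function.comp_apply (f := PowerSeries.constantCoeff), hL, h₀]
      exact hA i h
    · rw [Function.comp_apply, PowerSeries.coeff_C]
      split_ifs
      exacts [hB h, B.zero_mem]
  choose next hdvd hnext using fun n (s : {s // P n s}) =>
    exists_series_step hAB hL s.2.1 s.2.2
  let s (n : ℕ) : {s // P n s} := Nat.rec ⟨_, hP₀⟩ (fun n s => ⟨next n s, hnext n s⟩) n
  obtain ⟨θ, hθ⟩ := exists_series_limit (s := fun n => (s n).1) fun n => hdvd n (s n)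
  have hcoeff {f f' : K⟦X⟧} {n : ℕ} (h : PowerSeries.X ^ (n + 1) ∣ f - f') :
      PowerSeries.coeff n f = PowerSeries.coeff n f' := by
    rw [← sub_eq_zero, ← map_sub]
    exact PowerSeries.X_pow_dvd_iff.1 h n n.lt_succ_self
  refine ⟨θ, (funext fun h => ?_).trans h₀, fun i h n => ?_, fun h n => ?_⟩
  · rw [Function.comp_apply, ← PowerSeries.coeff_zero_eq_constantCoeff_apply, hcoeff (hθ 0 h),
      PowerSeries.coeff_zero_eq_constantCoeff_apply]
    rfl
  · rw [hcoeff (dvd_map_sub (hθ n) h)]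
    exact (s n).2.1 i h n le_rfl
  · rw [hcoeff (hθ n h)]
    exact (s n).2.2 h n

end Cartan

section RationalFunctions

variable {k : Type*} [Field k]

theorem div_mem_localRing (p : k[X]) {q : k[X]} {c : k} (hq : q.eval c ≠ 0) :
    algebraMap k[X] (RatFunc k) p / algebraMap k[X] (RatFunc k) q ∈ localRing c := by
  obtain ⟨r, hr⟩ := (localRing.isUnit_algebraMap hq).exists_right_inv
  have hr' : algebraMap k[X] (RatFunc k) q * r = 1 := congrArg Subtype.val hr
  rw [div_eq_mul_inv, ← eq_inv_of_mul_eq_one_right hr']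
  exact (localRing c).mul_mem ((localRing c).algebraMap_mem p) r.2

theorem mem_localRing_iff {f : RatFunc k} {c : k} : f ∈ localRing c ↔ f.denom.eval c ≠ 0 := by
  refine ⟨fun hf => ?_, fun hf => ?_⟩
  · obtain ⟨p, q, hpq⟩ := IsLocalization.exists_mk'_eq
      (RingHom.ker (evalRingHom c)).primeCompl (⟨f, hf⟩ : localRing c)
    have hq : q.1.eval c ≠ 0 := q.2
    have hq0 : q.1 ≠ 0 := fun h => hq (by rw [h, eval_zero])
    have hfq := congrArg Subtype.val (IsLocalization.mk'_eq_iff_eq_mul.1 hpq)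
    have hf' : f = algebraMap k[X] (RatFunc k) p / algebraMap k[X] (RatFunc k) q.1 :=
      (eq_div_iff ((map_ne_zero_iff _ (RatFunc.algebraMap_injective k)).2 hq0)).2 hfq.symm
    obtain ⟨r, hr⟩ := (RatFunc.denom_dvd hq0).2 ⟨p, hf'⟩
    exact left_ne_zero_of_mul (eval_mul (x := c) ▸ hr ▸ hq)
  · rw [← RatFunc.num_div_denom f]
    exact div_mem_localRing _ hf

theorem exists_algebraMap_eq_of_forall_mem_localRing [IsAlgClosed k] {f : RatFunc k}
    (hf : ∀ c, f ∈ localRing c) : ∃ p, algebraMap k[X] (RatFunc k) p = f := by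
  have hdeg : f.denom.natDegree = 0 := by
    by_contra h
    obtain ⟨c, hc⟩ := IsAlgClosed.exists_root f.denom fun hdeg =>
      h (natDegree_eq_of_degree_eq_some hdeg)
    exact mem_localRing_iff.1 (hf c) hc
  refine ⟨f.num, ?_⟩
  conv_rhs => rw [← RatFunc.num_div_denom f,
    (RatFunc.monic_denom f).natDegree_eq_zero.1 hdeg, map_one, div_one]

open Classical in
/-- The rational functions that are regular at infinity and at every point outside `s`. -/
noncomputable def regularAway (s : Set k) : Subring (RatFunc k) :=
  (RatFunc.inftyValuation k).integer ⊓ ⨅ c : (sᶜ : Set k), (localRing c.1).toSubring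

open Classical in
theorem mem_regularAway {s : Set k} {f : RatFunc k} : f ∈ regularAway s ↔
    RatFunc.inftyValuation k f ≤ 1 ∧ ∀ c ∉ s, f ∈ localRing c := by
  simp [regularAway, Subring.mem_inf, Subring.mem_iInf, Valuation.mem_integer_iff]

open Classical in
theorem inftyValuation_algebraMap_le {p q : k[X]} (hq : q ≠ 0) :
    RatFunc.inftyValuation k (algebraMap k[X] (RatFunc k) p) ≤
      RatFunc.inftyValuation k (algebraMap k[X] (RatFunc k) q) ↔ p.natDegree ≤ q.natDegree := by
  rcases eq_or_ne p 0 with rfl | hp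
  · simp
  · rw [RatFunc.inftyValuation_apply, RatFunc.inftyValuation_apply,
      RatFunc.inftyValuation.polynomial k hp, RatFunc.inftyValuation.polynomial k hq,
      WithZero.exp_le_exp, Nat.cast_le]

open Classical in
theorem inftyValuation_div_le_one {f : RatFunc k} {q : k[X]} (hq : q ≠ 0) :
    RatFunc.inftyValuation k (f / algebraMap k[X] (RatFunc k) q) ≤ 1 ↔
      RatFunc.inftyValuation k f ≤ RatFunc.inftyValuation k (algebraMap k[X] (RatFunc k) q) := by
  rw [map_div₀, div_le_one₀]
  exact zero_lt_iff.2 ((Valuation.ne_zero_iff _).2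
    ((map_ne_zero_iff _ (RatFunc.algebraMap_injective k)).2 hq))

variable {s : Set k}

theorem div_mem_regularAway {p q : k[X]} (hdeg : p.natDegree ≤ q.natDegree)
    (hq0 : q ≠ 0) (hq : ∀ c ∉ s, q.eval c ≠ 0) :
    algebraMap k[X] (RatFunc k) p / algebraMap k[X] (RatFunc k) q ∈ regularAway s :=
  mem_regularAway.2 ⟨(inftyValuation_div_le_one hq0).2 ((inftyValuation_algebraMap_le hq0).2 hdeg),
    fun c hc => div_mem_localRing p (hq c hc)⟩

theorem exists_polynomial_of_div_mem_regularAway [IsAlgClosed k] {f : RatFunc k} {q : k[X]}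
    (hq : q ≠ 0) (hfq : f / algebraMap k[X] (RatFunc k) q ∈ regularAway s)
    (hf : ∀ c ∈ s, f ∈ localRing c) :
    ∃ p : k[X], p.natDegree ≤ q.natDegree ∧ algebraMap k[X] (RatFunc k) p = f := by
  have hqK := (map_ne_zero_iff _ (RatFunc.algebraMap_injective k)).2 hq
  obtain ⟨hinf, hloc⟩ := mem_regularAway.1 hfq
  have hmem (c : k) : f ∈ localRing c := by
    by_cases hc : c ∈ s
    · exact hf c hc
    · rw [← div_mul_cancel₀ f hqK]
      exact (localRing c).mul_mem (hloc c hc) ((localRing c).algebraMap_mem q)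
  obtain ⟨p, rfl⟩ := exists_algebraMap_eq_of_forall_mem_localRing hmem
  exact ⟨p, (inftyValuation_algebraMap_le hq).1 ((inftyValuation_div_le_one hq).1 hinf), rfl⟩

theorem exists_partialFraction (a : k) (f : RatFunc k) : ∃ (m : ℕ) (b r q : k[X]),
    b.natDegree ≤ ((X - C a) ^ m).natDegree ∧ q.eval a ≠ 0 ∧
      f = algebraMap k[X] (RatFunc k) b / algebraMap k[X] (RatFunc k) ((X - C a) ^ m) +
        algebraMap k[X] (RatFunc k) r / algebraMap k[X] (RatFunc k) q := by
  obtain ⟨q, hdenom, hq⟩ := exists_eq_pow_rootMultiplicity_mul_and_not_dvd f.denom f.denom_ne_zero a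
  generalize f.denom.rootMultiplicity a = m at hdenom
  have hw : ((X - C a) ^ m).Monic := (monic_X_sub_C a).pow m
  obtain ⟨x, y, hxy⟩ : IsCoprime ((X - C a) ^ m) q :=
    ((irreducible_X_sub_C a).coprime_iff_not_dvd.2 hq).pow_left
  refine ⟨m, (y * f.num) %ₘ (X - C a) ^ m, x * f.num + (y * f.num) /ₘ (X - C a) ^ m * q, q,
    natDegree_modByMonic_le _ hw,
    fun h => hq (dvd_iff_isRoot.2 h), ?_⟩
  have hdiv := modByMonic_add_div (y * f.num) ((X - C a) ^ m)
  generalize (y * f.num) %ₘ (X - C a) ^ m = b at hdiv ⊢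
  generalize (y * f.num) /ₘ (X - C a) ^ m = d at hdiv ⊢
  have hnum : f.num = b * q + (X - C a) ^ m * (x * f.num + d * q) := by
    linear_combination (-f.num) * hxy - q * hdiv
  have hne {p : k[X]} (hp : p ≠ 0) : algebraMap k[X] (RatFunc k) p ≠ 0 :=
    (map_ne_zero_iff _ (RatFunc.algebraMap_injective k)).2 hp
  have hq0 : q ≠ 0 := fun h => hq (h ▸ dvd_zero _)
  rw [div_add_div _ _ (hne hw.ne_zero) (hne hq0), ← map_mul, ← map_mul, ← map_mul, ← map_add,
    ← hnum, ← hdenom, RatFunc.num_div_denom]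

theorem exists_principalPart {a : k} (ha : a ∈ s) (f : RatFunc k) : ∃ p : RatFunc k,
    f - p ∈ localRing a ∧ (∀ c ≠ a, p ∈ localRing c) ∧ p ∈ regularAway s := by
  obtain ⟨m, b, r, q, hb, hq, hf⟩ := exists_partialFraction a f
  have hw : ∀ c ≠ a, ((X - C a) ^ m).eval c ≠ 0 := fun c hc => by
    rw [eval_pow, eval_sub, eval_X, eval_C]
    exact pow_ne_zero _ (sub_ne_zero.2 hc)
  refine ⟨_, ?_, fun c hc => div_mem_localRing b (hw c hc),
    div_mem_regularAway hb (pow_ne_zero m (X_sub_C_ne_zero a)) fun c hc =>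
      hw c fun h => hc (h ▸ ha)⟩
  rw [hf, add_sub_cancel_left]
  exact div_mem_localRing r hq

end RationalFunctions

section Roots

theorem exists_pow_eq_of_constantCoeff_eq_one {R : Type*} [CommRing R] {n : ℕ}
    (hn : IsUnit (n : R)) {f : R⟦X⟧} (hf : PowerSeries.constantCoeff f = 1) :
    ∃ y : R⟦X⟧, PowerSeries.constantCoeff y = 1 ∧ y ^ n = f := by
  nontriviality R
  have hn0 : n ≠ 0 := by
    rintro rfl
    simp at hn
  obtain ⟨y, hy, hy1⟩ := HenselianRing.is_henselian (I := Ideal.span {(PowerSeries.X : R⟦X⟧)})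
    (X ^ n - C f) (monic_X_pow_sub_C f hn0) 1
    (Ideal.mem_span_singleton.2 (PowerSeries.X_dvd_iff.2 (by simp [hf])))
    (RingHom.isUnit_map _ (by simpa [derivative_X_pow] using hn.map (PowerSeries.C (R := R))))
  rw [Ideal.mem_span_singleton, PowerSeries.X_dvd_iff, map_sub, map_one, sub_eq_zero] at hy1
  exact ⟨y, hy1, by simpa [sub_eq_zero] using hy⟩

theorem exists_sub_X_mul_pow_eq {K : Type*} [Field K] {n : ℕ} (hn : (n : K) ≠ 0) {u : K}
    (hu : u ≠ 0) : ∃ y : K⟦X⟧, PowerSeries.constantCoeff y = 1 ∧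
      (PowerSeries.C u - PowerSeries.X) * y ^ n = PowerSeries.C u := by
  have hv : PowerSeries.constantCoeff (PowerSeries.C u - PowerSeries.X : K⟦X⟧) ≠ 0 := by
    simpa using hu
  obtain ⟨y, hy, hyn⟩ := exists_pow_eq_of_constantCoeff_eq_one hn.isUnit
    (f := (PowerSeries.C u - PowerSeries.X)⁻¹ * PowerSeries.C u) (by simp [hu])
  exact ⟨y, hy, by rw [hyn, ← mul_assoc, PowerSeries.mul_inv_cancel _ hv, one_mul]⟩

end Roots

section Frame

variable {k : Type*} [Field k] {G : Type*} [Group G] [Finite G] [DecidableEq G]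

/-- The linear polynomial in `t` over `k⟦X⟧` vanishing at the deformation `c + X` of the point
`c`. -/
noncomputable def movedLinear (c : k) : k⟦X⟧[X] :=
  X - C (PowerSeries.C c + PowerSeries.X)

theorem toSeries_movedLinear {B : Type*} [CommRing B] (φ : k[X] →+* B) (c : k) :
    toSeries φ (movedLinear c) = PowerSeries.C (φ (X - C c)) - PowerSeries.X := by
  rw [movedLinear, map_sub, toSeries_X, toSeries_C, map_add, PowerSeries.map_C, PowerSeries.map_X,
    map_sub, map_sub, sub_add_eq_sub_sub, RingHom.comp_apply]

/-- The constant coefficient of a power series, as a homomorphism of algebras. -/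
def constantCoeffAlgHom {R A : Type*} [CommSemiring R] [CommSemiring A] [Algebra R A] :
    A⟦X⟧ →ₐ[R] A where
  __ := PowerSeries.constantCoeff
  commutes' _ := PowerSeries.constantCoeff_C _

/-- The patching data attached to points `a g` on the affine line. Near `a g` one glues the trivial
`G`-cover to the one induced from the Kummer cover with group generated by `g` and equation
`y ^ orderOf g = (t - a g) / (t - a g - X)`. The series `θ` is the basis of the glued algebra: it is
regular away from the points `a g`, and near `a g` after the twist by `(y g)⁻¹`. -/
structure PatchingFrame (ζ : G → k) (a : G → k) where
  θ : G → (RatFunc k)⟦X⟧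
  y : G → (RatFunc k)⟦X⟧
  y' : G → (RatFunc k)⟦X⟧
  constantCoeff_θ : PowerSeries.constantCoeff ∘ θ = Pi.single 1 1
  constantCoeff_y' : ∀ g, PowerSeries.constantCoeff (y' g) = 1
  y'_mul_y : ∀ g, y' g * y g = 1
  mul_y_pow : ∀ g, toSeries (algebraMap k[X] (RatFunc k)) (movedLinear (a g)) * y g ^ orderOf g =
    toSeries (algebraMap k[X] (RatFunc k)) (X - C (PowerSeries.C (a g)))
  local_mem : ∀ g h n, PowerSeries.coeff n (twist (ζ g) g (y' g) θ h) ∈ localRing (a g)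
  away_mem : ∀ h n, PowerSeries.coeff n (θ h) ∈ regularAway (Set.range a)

omit [Group G] [Finite G] in
theorem single_one_mem {R : Type*} [Ring R] (A : Subring R) {g : G} (h : G) :
    (Pi.single g 1 : G → R) h ∈ A := by
  rw [Pi.single_apply]
  split_ifs
  exacts [A.one_mem, A.zero_mem]

theorem nonempty_patchingFrame {ζ a : G → k} (hζ : ∀ g, IsPrimitiveRoot (ζ g) (orderOf g))
    (ha : Function.Injective a) : Nonempty (PatchingFrame ζ a) := by
  have hroot (g : G) : ∃ y : (RatFunc k)⟦X⟧, PowerSeries.constantCoeff y = 1 ∧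
      toSeries (algebraMap k[X] (RatFunc k)) (movedLinear (a g)) * y ^ orderOf g =
        toSeries (algebraMap k[X] (RatFunc k)) (X - C (PowerSeries.C (a g))) := by
    have : NeZero (orderOf g) := ⟨(orderOf_pos g).ne'⟩
    rw [toSeries_movedLinear, toSeries_X_sub_C_C]
    refine exists_sub_X_mul_pow_eq ?_
      ((map_ne_zero_iff _ (RatFunc.algebraMap_injective k)).2 (X_sub_C_ne_zero _))
    rw [← map_natCast (algebraMap k (RatFunc k))]
    exact (_root_.map_ne_zero _).2 (hζ g).neZero'.out
  choose y hy hyn using hroot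
  have hunit (g : G) : y g * (y g)⁻¹ = 1 := PowerSeries.mul_inv_cancel _ (by simp [hy])
  have hinv (g : G) : PowerSeries.constantCoeff (y g)⁻¹ = 1 := by simp [hy]
  obtain ⟨θ, hθ, hloc, haway⟩ := exists_series_mem
    (A := fun g => (localRing (a g)).toSubring.toAddSubgroup)
    (B := (regularAway (Set.range a)).toAddSubgroup)
    (L := fun g => twist (ζ g) g (y g)⁻¹) (θ₀ := Pi.single 1 1)
    (fun g f => have ⟨p, hp, hp', hpB⟩ := exists_principalPart (Set.mem_range_self g) f
      ⟨p, hp, fun g' hg' => hp' _ (ha.ne hg'), hpB⟩)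
    (fun g φ => comp_twist_of_map_eq_one (hζ g) (constantCoeffAlgHom (R := k)) (hinv g) φ)
    (fun g h => single_one_mem (localRing (a g)).toSubring h) (single_one_mem (regularAway _))
  exact ⟨⟨θ, y, fun g => (y g)⁻¹, hθ, hinv, fun g => mul_comm (y g) _ ▸ hunit g, hyn, hloc, haway⟩⟩

end Frame

section LiftConvolve

variable {G : Type*} [Group G] [Fintype G] [DecidableEq G] {A A' : Type*} [CommRing A]
  [CommRing A'] {ι : A' →+* A}

theorem exists_lift_convolve (hι : Function.Injective ι) {θ : G → A⟦X⟧}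
    (hθ : PowerSeries.constantCoeff ∘ θ = Pi.single 1 1)
    (hmem : ∀ h n, PowerSeries.coeff n (θ h) ∈ ι.range) :
    ∃ E : (G → A'⟦X⟧) ≃ₗ[A'⟦X⟧] G → A'⟦X⟧,
      (∀ p, PowerSeries.map ι ∘ E p = convolve θ (PowerSeries.map ι ∘ p)) ∧
      ∀ (s : G) p, E (fun x => p (s * x)) = fun x => E p (s * x) := by
  choose c hc using hmem
  obtain ⟨θ', rfl⟩ : ∃ θ' : G → A'⟦X⟧, PowerSeries.map ι ∘ θ' = θ :=
    ⟨fun h => PowerSeries.mk (c h), funext fun h => PowerSeries.ext fun n => by simp [hc]⟩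
  have hθ' : PowerSeries.constantCoeff ∘ θ' = Pi.single 1 1 := hι.comp_left <| by
    simp only
    rw [comp_single_one, ← hθ]
    funext h
    simp only [Function.comp_apply, ← PowerSeries.coeff_zero_eq_constantCoeff_apply,
      PowerSeries.coeff_map]
  exact ⟨LinearEquiv.ofBijective (convolve θ') (bijective_convolve hθ'),
    fun p => comp_convolve _ _ _, convolve_translate θ'⟩

end LiftConvolve

section PolynomialRange

variable {k : Type*} [Field k]

/-- The inclusion of the power series with coefficients in the local ring at `c`. -/
noncomputable def seriesIncl (c : k) : (localRing c)⟦X⟧ →ₐ[k] (RatFunc k)⟦X⟧ :=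
  PowerSeries.mapAlgHom (IsScalarTower.toAlgHom k (localRing c) (RatFunc k))

theorem seriesIncl_injective (c : k) : Function.Injective (seriesIncl c) :=
  PowerSeries.map_injective _ Subtype.val_injective

theorem coe_seriesIncl_comp_toSeries (c : k) :
    (seriesIncl c : (localRing c)⟦X⟧ →+* (RatFunc k)⟦X⟧).comp
      (toSeries (algebraMap k[X] (localRing c))) = toSeries (algebraMap k[X] (RatFunc k)) :=
  map_comp_toSeries _ (algebraMap (localRing c) (RatFunc k))

theorem seriesIncl_toSeries (c : k) (p : k⟦X⟧[X]) :
    seriesIncl c (toSeries (algebraMap k[X] (localRing c)) p) =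
      toSeries (algebraMap k[X] (RatFunc k)) p :=
  RingHom.congr_fun (coe_seriesIncl_comp_toSeries c) p

variable [IsAlgClosed k]

theorem mem_range_toSeries_of_mem {s : Set k} {q : k[X]} (hq : q ≠ 0) {f : (RatFunc k)⟦X⟧}
    (haway : PowerSeries.C (algebraMap k[X] (RatFunc k) q)⁻¹ * f ∈
      (PowerSeries.map (regularAway s).subtype).range)
    (hloc : ∀ c ∈ s, f ∈ (seriesIncl c).range) :
    f ∈ (toSeries (algebraMap k[X] (RatFunc k))).range := by
  refine mem_range_toSeries (m := q.natDegree) fun n => ?_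
  refine exists_polynomial_of_div_mem_regularAway (s := s) hq ?_ fun c hc => ?_
  · obtain ⟨r, hr⟩ := haway
    rw [div_eq_inv_mul, ← PowerSeries.coeff_C_mul, ← hr, PowerSeries.coeff_map]
    exact SetLike.coe_mem _
  · obtain ⟨r, rfl⟩ := hloc c hc
    exact SetLike.coe_mem (PowerSeries.coeff n r)

end PolynomialRange

section Glue

variable {k : Type*} [Field k] {G : Type*} [Group G] [Fintype G] [DecidableEq G] {ζ a : G → k}

/-- The common denominator of the glued algebra. -/
noncomputable def movedProd (a : G → k) : k⟦X⟧[X] := ∏ g, movedLinear (a g)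

omit [Group G] in
theorem toSeries_movedProd (a : G → k) (g : G) :
    toSeries (algebraMap k[X] (RatFunc k)) (movedProd a) = seriesIncl (a g)
      (toSeries (algebraMap k[X] (localRing (a g)))
          (∏ j ∈ Finset.univ.erase g, movedLinear (a j)) *
        toSeries (algebraMap k[X] (localRing (a g))) (movedLinear (a g))) := by
  rw [← map_mul, seriesIncl_toSeries, Finset.prod_erase_mul _ _ (Finset.mem_univ g), movedProd]

namespace PatchingFrame

variable (P : PatchingFrame ζ a)

/-- The trivialization of the glued algebra over the field of rational functions. -/
noncomputable def equiv : (G → (RatFunc k)⟦X⟧) ≃ₗ[(RatFunc k)⟦X⟧] G → (RatFunc k)⟦X⟧ :=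
  LinearEquiv.ofBijective (convolve P.θ) (bijective_convolve P.constantCoeff_θ)

/-- The glued algebra over the power series in `X` with coefficients in the rational functions. -/
noncomputable def order : NormalOrder G (RatFunc k)⟦X⟧ :=
  NormalOrder.ofEquiv P.equiv (convolve_translate P.θ)
    (toSeries (algebraMap k[X] (RatFunc k)) (movedProd a))

omit [Fintype G] in
theorem seriesIncl_mul_y_pow (g : G) :
    seriesIncl (a g) (toSeries (algebraMap k[X] (localRing (a g))) (movedLinear (a g))) *
        P.y g ^ orderOf g =
      seriesIncl (a g)
        (toSeries (algebraMap k[X] (localRing (a g))) (X - C (PowerSeries.C (a g)))) := by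
  rw [seriesIncl_toSeries, seriesIncl_toSeries, P.mul_y_pow]

theorem exists_away_equiv : ∃ E : (G → (regularAway (Set.range a))⟦X⟧)
      ≃ₗ[(regularAway (Set.range a))⟦X⟧] G → (regularAway (Set.range a))⟦X⟧,
    ∀ p, PowerSeries.map (regularAway (Set.range a)).subtype ∘ E p =
      P.equiv (PowerSeries.map (regularAway (Set.range a)).subtype ∘ p) :=
  have ⟨E, hE, _⟩ := exists_lift_convolve (ι := (regularAway (Set.range a)).subtype)
    Subtype.val_injective P.constantCoeff_θ fun h n => ⟨⟨_, P.away_mem h n⟩, rfl⟩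
  ⟨E, hE⟩

theorem exists_local_equiv (hζ : ∀ g, IsPrimitiveRoot (ζ g) (orderOf g)) (g : G) :
    ∃ E : (G → (localRing (a g))⟦X⟧) ≃ₗ[(localRing (a g))⟦X⟧] G → (localRing (a g))⟦X⟧,
      (∀ p, seriesIncl (a g) ∘ E p =
        twist (ζ g) g (P.y' g)
          (P.equiv (seriesIncl (a g) ∘ p))) ∧
      ∀ (s : G) p, E (fun x => p (s * x)) = fun x => E p (s * x) := by
  have hθ : PowerSeries.constantCoeff ∘ twist (ζ g) g (P.y' g) P.θ = Pi.single 1 1 :=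
    (comp_twist_of_map_eq_one (hζ g) constantCoeffAlgHom (P.constantCoeff_y' g) P.θ).trans
      P.constantCoeff_θ
  obtain ⟨E, hE, hEs⟩ := exists_lift_convolve (ι := algebraMap (localRing (a g)) (RatFunc k))
    Subtype.val_injective hθ fun h n => ⟨⟨_, P.local_mem g h n⟩, rfl⟩
  exact ⟨E, fun p => (hE p).trans
    (map_convolve (L := twist (ζ g) g (P.y' g)) twist_translate _ _).symm, hEs⟩

omit [Group G] [DecidableEq G] in
theorem inv_mul_movedProd_mem_range (a : G → k) (g₀ : G) :
    PowerSeries.C (algebraMap k[X] (RatFunc k) ((X - C (a g₀)) ^ Fintype.card G))⁻¹ *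
      toSeries (algebraMap k[X] (RatFunc k)) (movedProd a) ∈
    (PowerSeries.map (regularAway (Set.range a)).subtype).range := by
  have hne (c : k) : X - C c ≠ 0 := X_sub_C_ne_zero c
  have hdiv {p : k[X]} (hp : p.natDegree ≤ 1) :
      algebraMap k[X] (RatFunc k) p / algebraMap k[X] (RatFunc k) (X - C (a g₀)) ∈
        regularAway (Set.range a) :=
    div_mem_regularAway (by rwa [natDegree_X_sub_C]) (hne _) fun c hc => by
      rw [eval_sub, eval_X, eval_C, sub_ne_zero]
      exact fun h => hc ⟨g₀, h.symm⟩
  rw [movedProd, map_prod, ← Finset.card_univ, map_pow, ← inv_pow, map_pow, ← Finset.prod_const,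
    ← Finset.prod_mul_distrib]
  refine Subring.prod_mem _ fun g _ => ⟨PowerSeries.C ⟨_, hdiv (natDegree_X_sub_C_le (a g))⟩ -
    PowerSeries.C ⟨_, hdiv (p := 1) (by simp)⟩ * PowerSeries.X, ?_⟩
  rw [toSeries_movedLinear, map_sub, map_mul, PowerSeries.map_C, PowerSeries.map_C,
    PowerSeries.map_X, mul_sub, ← map_mul]
  simp [div_eq_inv_mul]

theorem mem_range_away {p : G → (RatFunc k)⟦X⟧}
    (hp : ∃ q, P.equiv p = PowerSeries.map (regularAway (Set.range a)).subtype ∘ q) (l : G) :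
    p l ∈ (PowerSeries.map (regularAway (Set.range a)).subtype).range := by
  obtain ⟨q, hq⟩ := hp
  obtain ⟨E, hE⟩ := P.exists_away_equiv
  exact mem_range_of_comp_eq P.equiv.injective E.surjective hE hq l

theorem order_γ (h h' : G) : P.equiv (P.order.γ h h') =
    toSeries (algebraMap k[X] (RatFunc k)) (movedProd a) •
      (P.equiv (Pi.single h 1) * P.equiv (Pi.single h' 1)) :=
  P.equiv.apply_symm_apply _

theorem order_d : P.equiv P.order.d = 1 :=
  P.equiv.apply_symm_apply _

theorem order_mem_range_away (g₀ : G) :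
    (∀ h h' l, PowerSeries.C (algebraMap k[X] (RatFunc k) ((X - C (a g₀)) ^ Fintype.card G))⁻¹ *
      P.order.γ h h' l ∈ (PowerSeries.map (regularAway (Set.range a)).subtype).range) ∧
    ∀ l, PowerSeries.C (algebraMap k[X] (RatFunc k) ((X - C (a g₀)) ^ Fintype.card G))⁻¹ *
      P.order.d l ∈ (PowerSeries.map (regularAway (Set.range a)).subtype).range := by
  set Q : k[X] := (X - C (a g₀)) ^ Fintype.card G with hQ
  set ι := PowerSeries.map (regularAway (Set.range a)).subtype with hι
  obtain ⟨E, hE⟩ := P.exists_away_equiv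
  have hsingle (h : G) : P.equiv (Pi.single h 1) = ι ∘ E (Pi.single h 1) := by
    rw [hE, comp_single_one]
  have hinv : (algebraMap k[X] (RatFunc k) Q)⁻¹ ∈ regularAway (Set.range a) := by
    rw [← one_div, ← map_one (algebraMap k[X] (RatFunc k))]
    refine div_mem_regularAway (by simp) (pow_ne_zero _ (X_sub_C_ne_zero _)) fun c hc => ?_
    rw [hQ, eval_pow, eval_sub, eval_X, eval_C]
    exact pow_ne_zero _ (sub_ne_zero.2 fun h => hc ⟨g₀, h.symm⟩)
  obtain ⟨r, hr⟩ := inv_mul_movedProd_mem_range a g₀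
  refine ⟨fun h h' => P.mem_range_away (p := PowerSeries.C (algebraMap k[X] (RatFunc k) Q)⁻¹ • _)
      ⟨r • (E (Pi.single h 1) * E (Pi.single h' 1)), ?_⟩,
    P.mem_range_away (p := PowerSeries.C (algebraMap k[X] (RatFunc k) Q)⁻¹ • _)
      ⟨fun _ => PowerSeries.C ⟨_, hinv⟩, ?_⟩⟩
  · rw [map_smul, order_γ, smul_smul, ← hr, hsingle, hsingle]
    funext x
    simp [hι]
  · rw [map_smul, order_d]
    funext x
    simp

variable (hζ : ∀ g, IsPrimitiveRoot (ζ g) (orderOf g))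
include hζ

theorem mem_range_local (g : G) {p : G → (RatFunc k)⟦X⟧}
    (hp : ∃ q, twist (ζ g) g (P.y' g) (P.equiv p) =
      seriesIncl (a g) ∘ q) (l : G) :
    p l ∈ (seriesIncl (a g)).range := by
  obtain ⟨q, hq⟩ := hp
  obtain ⟨E, hE, -⟩ := P.exists_local_equiv hζ g
  exact mem_range_of_comp_eq
    ((twist_injective (hζ g) (.of_mul_eq_one _ (P.y'_mul_y g))).comp P.equiv.injective)
    E.surjective hE hq l

theorem order_mem_range_local (g : G) :
    (∀ h h' l, P.order.γ h h' l ∈ (seriesIncl (a g)).range) ∧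
      ∀ l, P.order.d l ∈ (seriesIncl (a g)).range := by
  obtain ⟨E, hE, -⟩ := P.exists_local_equiv hζ g
  have hsingle (h : G) : twist (ζ g) g (P.y' g) (P.equiv (Pi.single h 1)) =
      seriesIncl (a g) ∘ E (Pi.single h 1) := by
    rw [hE, ← comp_single_one (seriesIncl (a g) : (localRing (a g))⟦X⟧ →+* (RatFunc k)⟦X⟧),
      RingHom.coe_coe]
  refine ⟨fun h h' => P.mem_range_local hζ g ?_, P.mem_range_local hζ g ⟨1, ?_⟩⟩
  · rw [order_γ, toSeries_movedProd a g]
    exact ⟨_, twist_smul_mul_eq_comp (hζ g) (P.seriesIncl_mul_y_pow g) (P.y'_mul_y g) _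
      (hsingle h) (hsingle h')⟩
  · rw [order_d, twist_one (hζ g)]
    exact funext fun _ => (map_one _).symm

theorem exists_polynomial_order [IsAlgClosed k] :
    ∃ S : NormalOrder G k⟦X⟧[X], S.map (toSeries (algebraMap k[X] (RatFunc k))) = P.order := by
  have hq : (X - C (a 1)) ^ Fintype.card G ≠ 0 := pow_ne_zero _ (X_sub_C_ne_zero _)
  refine NormalOrder.exists_map_eq (toSeries_injective (RatFunc.algebraMap_injective k)) P.order
    (fun h h' l => ?_) (fun l => ?_) ⟨_, rfl⟩
  · refine mem_range_toSeries_of_mem hq ((P.order_mem_range_away 1).1 h h' l) ?_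
    rintro _ ⟨g, rfl⟩
    exact (P.order_mem_range_local hζ g).1 h h' l
  · refine mem_range_toSeries_of_mem hq ((P.order_mem_range_away 1).2 l) ?_
    rintro _ ⟨g, rfl⟩
    exact (P.order_mem_range_local hζ g).2 l

theorem nonempty_branch {S : NormalOrder G k⟦X⟧[X]}
    (hS : S.map (toSeries (algebraMap k[X] (RatFunc k))) = P.order) (g : G) :
    Nonempty (Branch S (evalRingHom (PowerSeries.C (a g))) (X - C (PowerSeries.C (a g))) g) := by
  let J := toSeries (algebraMap k[X] (localRing (a g)))
  obtain ⟨E, hE, hEs⟩ := P.exists_local_equiv hζ g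
  have hJ : (PowerSeries.map (localRing.ev (a g))).comp J = evalRingHom (PowerSeries.C (a g)) := by
    rw [map_comp_toSeries, localRing.ev_comp_algebraMap, toSeries_evalRingHom]
  have hu : J (X - C (PowerSeries.C (a g))) = PowerSeries.C (localRing.unif (a g)) :=
    toSeries_X_sub_C_C _ _
  have hSJ : (S.map J).map (seriesIncl (a g) : (localRing (a g))⟦X⟧ →+* (RatFunc k)⟦X⟧) =
      P.order := by
    rw [← hS, ← coe_seriesIncl_comp_toSeries (a g)]
    rfl
  obtain ⟨M⟩ := nonempty_kummer_of_map_eq (hζ g) (seriesIncl_injective (a g))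
    (u := J (X - C (PowerSeries.C (a g)))) (c := J (∏ j ∈ Finset.univ.erase g, movedLinear (a j)))
    (P.seriesIncl_mul_y_pow g) (P.y'_mul_y g) (hT := convolve_translate P.θ) hE hEs
    (hSJ.trans (by rw [order, toSeries_movedProd a g]))
  obtain ⟨B⟩ := M.nonempty_branch (hζ g) (ev := PowerSeries.map (localRing.ev (a g))) (by
    rw [← RingHom.comp_apply, hJ]
    simp)
  refine B.nonempty_of_map_series hJ (fun f hf => ?_) ?_
  · rw [hu]
    exact C_dvd_of_map_eq_zero (localRing.ker_ev (a g)) hf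
  · rw [hu]
    exact (IsRegular.of_ne_zero <| (map_ne_zero_iff _ PowerSeries.C_injective).2
      (localRing.irreducible_unif (a g)).ne_zero).left

omit hζ in
theorem eval_ne_zero {S : NormalOrder G k⟦X⟧[X]}
    (hS : S.map (toSeries (algebraMap k[X] (RatFunc k))) = P.order) (g : G) :
    S.D.eval (PowerSeries.C (a g)) ≠ 0 := by
  have hD : S.D = movedProd a :=
    toSeries_injective (RatFunc.algebraMap_injective k) (congrArg NormalOrder.D hS)
  rw [hD, movedProd, eval_prod, Finset.prod_ne_zero_iff]
  intro j _ h0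
  have := congrArg (PowerSeries.coeff 1) h0
  simp [movedLinear] at this

end PatchingFrame

end Glue

theorem exists_order_of_isAlgClosed (k : Type*) [Field k] [IsAlgClosed k] (G : Type*) [Group G]
    [Fintype G] [DecidableEq G] (hG : (Fintype.card G : k) ≠ 0) :
    ∃ (S : NormalOrder G k[X]) (a : G → k), (∀ g, S.D.eval (a g) ≠ 0) ∧
      ∀ g, Nonempty (Branch S (evalRingHom (a g)) (X - C (a g)) g) := by
  have hζ (g : G) : ∃ ζ : k, IsPrimitiveRoot ζ (orderOf g) := by
    have : NeZero (orderOf g : k) := ⟨fun h => hG <| by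
      obtain ⟨m, hm⟩ := orderOf_dvd_card (x := g)
      rw [hm, Nat.cast_mul, h, zero_mul]⟩
    exact HasEnoughRootsOfUnity.exists_primitiveRoot k (orderOf g)
  choose ζ hζ using hζ
  obtain ⟨P⟩ := nonempty_patchingFrame hζ
    ((Infinite.natEmbedding k).injective.comp
      (Fin.val_injective.comp (Fintype.equivFin G).injective))
  obtain ⟨S, hS⟩ := P.exists_polynomial_order hζ
  have hB (g : G) := P.nonempty_branch hζ hS g
  obtain ⟨S', hD, hB'⟩ := exists_specialization S _ (fun g => (hB g).some) (P.eval_ne_zero hS)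
  exact ⟨S', _, hD, hB'⟩

end Patching

open Patching in
theorem finite_group_occurs_as_galoisGroup_over_algClosure_ratFunc_general (k : Type u) [Field k]
    [IsAlgClosed k] (G : Type v) [Group G] [Finite G] (hG : (Nat.card G : k) ≠ 0) :
    ∃ (N : Type (max u v)) (_ : Field N) (_ : Algebra (RatFunc k) N),
      FiniteDimensional (RatFunc k) N ∧ IsGalois (RatFunc k) N ∧
        Nonempty ((N ≃ₐ[RatFunc k] N) ≃* G) := by
  classical
  have := Fintype.ofFinite G
  rw [Nat.card_eq_fintype_card] at hG
  obtain ⟨S, a, hD, hB⟩ := exists_order_of_isAlgClosed k G hG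
  exact exists_galois_of_branches S a hD hB

/-- Every finite group occurs as the Galois group of a finite Galois extension of
`ℚ̄(t)`, where `ℚ̄` is the algebraic closure of `ℚ`. -/
theorem finite_group_occurs_as_galoisGroup_over_algClosure_ratFunc
    (G : Type) [Group G] [Finite G] :
    ∃ (N : Type) (_ : Field N) (_ : Algebra (RatFunc (AlgebraicClosure ℚ)) N),
      FiniteDimensional (RatFunc (AlgebraicClosure ℚ)) N ∧
        IsGalois (RatFunc (AlgebraicClosure ℚ)) N ∧
          Nonempty ((N ≃ₐ[RatFunc (AlgebraicClosure ℚ)] N) ≃* G) :=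
  finite_group_occurs_as_galoisGroup_over_algClosure_ratFunc_general (AlgebraicClosure ℚ) G
    (Nat.cast_ne_zero.2 Nat.card_pos.ne')
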